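/- (Hind's folding bound.) For every integer k ≥ 1 and every real x ≥ 1, one has c_k(x) ≤ 3x/(x+1). -/

import Mathlib

noncomputable section

/-- The standard symplectic form `ω₀ = Σ dxⱼ ∧ dyⱼ` on `ℝ²ⁿ ≅ ℂⁿ`,
identified via `z_j = x_j + i y_j`; on tangent vectors `u v : Fin n → ℂ` it is
`Σⱼ Im(conj (u j) * v j) = Σⱼ (uⱼ.re * vⱼ.im - uⱼ.im * vⱼ.re)`. -/
def omega0 {n : ℕ} (u v : Fin n → ℂ) : ℝ :=
  ∑ j, ((starRingEnd ℂ) (u j) * v j).im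

/-- `U ↪ V`: there is a smooth injective map `f` defined on an open neighbourhood `W` of `U`
with `f(U) ⊆ V`, whose derivative preserves `ω₀`. -/
def SympEmb {n : ℕ} (U V : Set (Fin n → ℂ)) : Prop :=
  ∃ (W : Set (Fin n → ℂ)) (f : (Fin n → ℂ) → (Fin n → ℂ)),
    IsOpen W ∧ U ⊆ W ∧ ContDiffOn ℝ (⊤ : ℕ∞) f W ∧ Set.InjOn f W ∧ f '' U ⊆ V ∧
    ∀ p ∈ W, ∀ u v : Fin n → ℂ,
      omega0 (fderiv ℝ f p u) (fderiv ℝ f p v) = omega0 u v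

/-- `E(a,b) × ℝ^{2k} ⊆ ℝ^{4+2k} ≅ ℂ^{k+2}`: the set of `z` with
`π(|z₀|²/a + |z₁|²/b) ≤ 1`, with no constraint on the remaining `k` complex coordinates.
For `k = 0` this is the ellipsoid `E(a,b) ⊂ ℂ²`, and `stabEll μ μ k` is `B⁴(μ) × ℝ^{2k}`. -/
def stabEll (a b : ℝ) (k : ℕ) : Set (Fin (k + 2) → ℂ) :=
  {z | Real.pi * (‖z 0‖ ^ 2 / a + ‖z 1‖ ^ 2 / b) ≤ 1}

/-- `c_k(x) = inf {μ > 0 : E(1,x) × ℝ^{2k} ↪ B⁴(μ) × ℝ^{2k}}`. -/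
def ck (k : ℕ) (x : ℝ) : ℝ :=
  sInf {μ : ℝ | 0 < μ ∧ SympEmb (stabEll 1 x k) (stabEll μ μ k)}

end

/-!
Hind's folding construction. View `E(1, x)` as a family of discs, of area `1 - s / x` over the
points of the second plane that bound area `s`, and put `a = x / (x + 1)`, so that the discs with
`s > a` have area less than `a`. The part `s > a` of the second plane is stretched into a long thin
tail. Wrapping the tail round the second plane in symplectic polar coordinates costs no area, but
then its successive turns overlap. To separate them, the discs over each turn are translated in the
first plane, from where they occupy the areas up to about `a` to where they occupy the areas between
about `a` and `2a` or back, while the radius of the second plane decreases at nearly equal rate; the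
turns on which they have come back are kept apart by a displacement in one stabilising plane. Since
the area in the first plane grows only when that in the second decreases, the two together never
exceed about `3a = 3x / (x + 1)`.
-/

section

open Filter Topology
open scoped ContDiff

section Calculus

lemma contDiff_primitive {G : ℝ → ℝ} (hG : ContDiff ℝ ∞ G) (a : ℝ) :
    ContDiff ℝ ∞ fun s => ∫ t in a..s, G t := by
  refine contDiff_infty_iff_deriv.2 ⟨?_, ?_⟩
  · exact intervalIntegral.differentiable_integral_of_continuous hG.continuous
  · rwa [funext fun s => hG.continuous.deriv_integral G a s]

lemma surjective_of_le_deriv {g : ℝ → ℝ} {η : ℝ} (hη : 0 < η) (hg : Differentiable ℝ g)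
    (h : ∀ s, η ≤ deriv g s) : Function.Surjective g := by
  have hlin := mul_sub_le_image_sub_of_le_deriv hg h
  refine hg.continuous.surjective ?_ ?_
  · refine tendsto_atTop_mono' atTop ?_
      ((tendsto_id.const_mul_atTop hη).atTop_add (tendsto_const_nhds (x := g 0)))
    filter_upwards [eventually_ge_atTop 0] with s hs
    linarith [hlin hs, show η * id s = η * (s - 0) by simp]
  · refine tendsto_atBot_mono' atBot ?_
      ((tendsto_id.const_mul_atBot hη).atBot_add (tendsto_const_nhds (x := g 0)))
    filter_upwards [eventually_le_atBot 0] with s hs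
    linarith [hlin hs, show η * id s = -(η * (0 - s)) by simp]

lemma exists_contDiff_inverse {g : ℝ → ℝ} {η : ℝ} (hη : 0 < η) (hg : ContDiff ℝ ∞ g)
    (h : ∀ s, η ≤ deriv g s) :
    ∃ γ : ℝ → ℝ, ContDiff ℝ ∞ γ ∧ Function.LeftInverse γ g ∧ Function.RightInverse γ g := by
  have hpos : ∀ s, 0 < deriv g s := fun s => hη.trans_le (h s)
  have hd : Differentiable ℝ g := hg.differentiable (by simp)
  let Φ := ((strictMono_of_deriv_pos hpos).orderIsoOfSurjective g
    (surjective_of_le_deriv hη hd h)).toHomeomorph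
  exact ⟨Φ.symm, Φ.contDiff_symm_deriv (fun s => (hpos s).ne') (fun s => (hd s).hasDerivAt) hg,
    Φ.symm_apply_apply, Φ.apply_symm_apply⟩

lemma deriv_eq_inv_of_rightInverse {g γ : ℝ → ℝ} (hγ : Continuous γ)
    (hr : Function.RightInverse γ g) {x : ℝ} (h : deriv g (γ x) ≠ 0) :
    deriv γ x = (deriv g (γ x))⁻¹ :=
  ((differentiableAt_of_deriv_ne_zero h).hasDerivAt.of_local_left_inverse hγ.continuousAt h
    (Eventually.of_forall hr)).deriv

lemma deriv_eq_zero_of_forall_lt {f : ℝ → ℝ} {c p x : ℝ} (h : ∀ s < p, f s = c) (hx : x < p) :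
    deriv f x = 0 := by
  have : f =ᶠ[𝓝 x] fun _ => c := by filter_upwards [eventually_lt_nhds hx] using h
  rw [this.deriv_eq, deriv_const]

lemma deriv_eq_zero_of_forall_gt {f : ℝ → ℝ} {c p x : ℝ} (h : ∀ s, p < s → f s = c)
    (hx : p < x) : deriv f x = 0 := by
  have : f =ᶠ[𝓝 x] fun _ => c := by filter_upwards [eventually_gt_nhds hx] using h
  rw [this.deriv_eq, deriv_const]

lemma eventually_nhdsGT_lt {f : ℝ → ℝ} (hf : Continuous f) {a c : ℝ} (h : f a < c) :
    ∀ᶠ t in 𝓝[>] a, f t < c :=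
  (hf.continuousAt.eventually_lt_const h).filter_mono nhdsWithin_le_nhds

/-- A smooth step from `0` on `(-∞, a]` to `1` on `[b, ∞)`. -/
noncomputable def smoothStep (a b s : ℝ) : ℝ := Real.smoothTransition ((s - a) / (b - a))

@[fun_prop]
lemma contDiff_smoothStep (a b : ℝ) : ContDiff ℝ ∞ (smoothStep a b) :=
  Real.smoothTransition.contDiff.comp ((contDiff_id.sub contDiff_const).div_const _)

lemma smoothStep_nonneg (a b s : ℝ) : 0 ≤ smoothStep a b s := Real.smoothTransition.nonneg _

lemma smoothStep_le_one (a b s : ℝ) : smoothStep a b s ≤ 1 := Real.smoothTransition.le_one _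

lemma smoothStep_eq_zero {a b s : ℝ} (h : a < b) (hs : s ≤ a) : smoothStep a b s = 0 :=
  Real.smoothTransition.zero_of_nonpos (div_nonpos_of_nonpos_of_nonneg (by linarith) (by linarith))

lemma smoothStep_eq_one {a b s : ℝ} (h : a < b) (hs : b ≤ s) : smoothStep a b s = 1 :=
  Real.smoothTransition.one_of_one_le ((one_le_div (by linarith)).2 (by linarith))

/-- A smooth bump supported in `[p, q]` and equal to `1` on `[p + h, q - h]`. -/
noncomputable def plateau (p q h s : ℝ) : ℝ :=
  smoothStep p (p + h) s * (1 - smoothStep (q - h) q s)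

variable {p q h s : ℝ}

@[fun_prop]
lemma contDiff_plateau : ContDiff ℝ ∞ (plateau p q h) :=
  (contDiff_smoothStep _ _).mul (contDiff_const.sub (contDiff_smoothStep _ _))

lemma continuous_plateau : Continuous (plateau p q h) := contDiff_plateau.continuous

lemma plateau_nonneg : 0 ≤ plateau p q h s :=
  mul_nonneg (smoothStep_nonneg _ _ _) (sub_nonneg.2 (smoothStep_le_one _ _ _))

lemma plateau_le_one : plateau p q h s ≤ 1 :=
  mul_le_one₀ (smoothStep_le_one _ _ _) (sub_nonneg.2 (smoothStep_le_one _ _ _))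
    (sub_le_self _ (smoothStep_nonneg _ _ _))

lemma plateau_eq_one (hh : 0 < h) (h1 : p + h ≤ s) (h2 : s ≤ q - h) : plateau p q h s = 1 := by
  rw [plateau, smoothStep_eq_one (by linarith) h1, smoothStep_eq_zero (by linarith) h2, one_mul,
    sub_zero]

lemma plateau_eq_zero_of_le (hh : 0 < h) (h1 : s ≤ p) : plateau p q h s = 0 := by
  rw [plateau, smoothStep_eq_zero (by linarith) h1, zero_mul]

lemma plateau_eq_zero_of_ge (hh : 0 < h) (h1 : q ≤ s) : plateau p q h s = 0 := by
  rw [plateau, smoothStep_eq_one (by linarith) h1, sub_self, mul_zero]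

lemma integral_eq_of_eqOn_zero {f : ℝ → ℝ} (hf : Continuous f) {a b c : ℝ}
    (h : Set.EqOn f 0 (Set.uIcc b c)) : ∫ t in a..c, f t = ∫ t in a..b, f t := by
  have h0 : ∫ t in b..c, f t = 0 := by
    rw [intervalIntegral.integral_congr h]; exact intervalIntegral.integral_zero
  rw [← intervalIntegral.integral_add_adjacent_intervals (hf.intervalIntegrable a b)
    (hf.intervalIntegrable b c), h0, add_zero]

lemma abs_integral_le_of_abs_le_one {f : ℝ → ℝ} (h : ∀ t, |f t| ≤ 1) (v : ℝ) :
    |∫ t in (0 : ℝ)..v, f t| ≤ |v| := by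
  simpa using intervalIntegral.norm_integral_le_of_norm_le_const (a := 0) (b := v) (f := f)
    (C := 1) fun t _ => h t

lemma abs_integral_plateau_le {b : ℝ} (hh : 0 < h) (hb : 0 ≤ b) (v : ℝ) :
    |∫ t in (0 : ℝ)..v, plateau (-b) b h t| ≤ b := by
  have hle : ∀ w, |∫ t in (0 : ℝ)..w, plateau (-b) b h t| ≤ |w| :=
    abs_integral_le_of_abs_le_one fun t => by
      rw [abs_of_nonneg plateau_nonneg]; exact plateau_le_one
  rcases le_total |v| b with hv | hv
  · exact (hle v).trans hv
  rcases le_abs.1 hv with hv | hv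
  · rw [integral_eq_of_eqOn_zero continuous_plateau (b := b) fun t ht =>
      plateau_eq_zero_of_ge hh (Set.uIcc_of_le hv ▸ ht).1]
    exact (hle b).trans_eq (abs_of_nonneg hb)
  · rw [integral_eq_of_eqOn_zero continuous_plateau (b := -b) fun t ht =>
      plateau_eq_zero_of_le hh (Set.uIcc_of_ge (le_neg_of_le_neg hv) ▸ ht).2]
    exact (hle (-b)).trans_eq (by rw [abs_neg, abs_of_nonneg hb])

lemma le_integral_plateau (hh : 0 < h) (hpq : p + h ≤ q - h) :
    q - p - 2 * h ≤ ∫ t in p..q, plateau p q h t := by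
  calc q - p - 2 * h = ∫ t in (p + h)..(q - h), plateau p q h t := by
        have h1 : Set.EqOn (plateau p q h) 1 (Set.uIcc (p + h) (q - h)) := fun t ht =>
          have ht := Set.uIcc_of_le hpq ▸ ht
          plateau_eq_one hh ht.1 ht.2
        rw [intervalIntegral.integral_congr h1]
        simp only [Pi.one_apply, integral_one]
        ring
    _ ≤ ∫ t in p..q, plateau p q h t :=
        intervalIntegral.integral_mono_interval (by linarith) hpq (by linarith)
          (Eventually.of_forall fun _ => plateau_nonneg)
          (continuous_plateau.intervalIntegrable _ _)

end Calculus

section SympAt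

variable {E F H : Type*} [NormedAddCommGroup E] [NormedSpace ℝ E] [NormedAddCommGroup F]
  [NormedSpace ℝ F] [NormedAddCommGroup H] [NormedSpace ℝ H]

/-- Being symplectic at a point: `f` is smooth at `p` and `D f p` pulls `ωF` back to `ωE`. The forms
are arbitrary constant functions of pairs of tangent vectors. -/
def SympAt (ωE : E → E → ℝ) (ωF : F → F → ℝ) (f : E → F) (p : E) : Prop :=
  ContDiffAt ℝ ∞ f p ∧
    ∀ u v, ωF (fderiv ℝ f p u) (fderiv ℝ f p v) = ωE u v

/-- The direct sum of two forms. -/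
def prodForm (ωE : E → E → ℝ) (ωF : F → F → ℝ) (u v : E × F) : ℝ :=
  ωE u.1 v.1 + ωF u.2 v.2

variable {ωE : E → E → ℝ} {ωF : F → F → ℝ} {ωH : H → H → ℝ}

lemma SympAt.of_hasFDerivAt {f : E → F} {p : E} {f' : E →L[ℝ] F}
    (hf : ContDiffAt ℝ ∞ f p) (h : HasFDerivAt f f' p)
    (hω : ∀ u v, ωF (f' u) (f' v) = ωE u v) : SympAt ωE ωF f p :=
  ⟨hf, by rw [h.fderiv]; exact hω⟩

lemma SympAt.differentiableAt {f : E → F} {p : E} (hf : SympAt ωE ωF f p) :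
    DifferentiableAt ℝ f p :=
  hf.1.differentiableAt (by simp)

lemma SympAt.comp {g : F → H} {f : E → F} (p : E) (hg : SympAt ωF ωH g (f p))
    (hf : SympAt ωE ωF f p) : SympAt ωE ωH (fun q => g (f q)) p := by
  refine SympAt.of_hasFDerivAt (hg.1.comp p hf.1)
    (hg.differentiableAt.hasFDerivAt.comp p hf.differentiableAt.hasFDerivAt) fun u v => ?_
  simp [hg.2, hf.2]

lemma SympAt.congr {f g : E → F} {p : E} (hf : SympAt ωE ωF f p) (h : g =ᶠ[𝓝 p] f) :
    SympAt ωE ωF g p :=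
  ⟨hf.1.congr_of_eventuallyEq h, by rw [h.fderiv_eq]; exact hf.2⟩

lemma sympAt_id (p : E) : SympAt ωE ωE (fun q => q) p :=
  SympAt.of_hasFDerivAt contDiffAt_id (hasFDerivAt_id p) fun _ _ => rfl

lemma sympAt_continuousLinearMap (f : E →L[ℝ] F) (h : ∀ u v, ωF (f u) (f v) = ωE u v) (p : E) :
    SympAt ωE ωF f p :=
  SympAt.of_hasFDerivAt f.contDiff.contDiffAt f.hasFDerivAt h

lemma SympAt.prodMap {E' F' : Type*} [NormedAddCommGroup E'] [NormedSpace ℝ E']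
    [NormedAddCommGroup F'] [NormedSpace ℝ F'] {ωE' : E' → E' → ℝ} {ωF' : F' → F' → ℝ}
    {f : E → F} {g : E' → F'} {p : E × E'} (hf : SympAt ωE ωF f p.1)
    (hg : SympAt ωE' ωF' g p.2) :
    SympAt (prodForm ωE ωE') (prodForm ωF ωF') (fun q => (f q.1, g q.2)) p := by
  refine SympAt.of_hasFDerivAt
    ((hf.1.comp p contDiffAt_fst).prodMk (hg.1.comp p contDiffAt_snd))
    ((hf.differentiableAt.hasFDerivAt.comp p hasFDerivAt_fst).prodMk
      (hg.differentiableAt.hasFDerivAt.comp p hasFDerivAt_snd)) fun u v => ?_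
  simp [prodForm, hf.2, hg.2]

end SympAt

/-- The plane with coordinates `(x, y)`. -/
abbrev Plane : Type := ℝ × ℝ

/-- The standard area form on the plane. -/
def areaForm (u v : Plane) : ℝ := u.1 * v.2 - u.2 * v.1

/-- The area of the centred disc whose boundary passes through `z`. -/
noncomputable def discArea (z : Plane) : ℝ := Real.pi * (z.1 ^ 2 + z.2 ^ 2)

lemma continuous_discArea : Continuous discArea := by
  unfold discArea; fun_prop

lemma discArea_nonneg (z : Plane) : 0 ≤ discArea z := by
  unfold discArea; positivity

lemma exists_pi_mul_sq_eq {A : ℝ} (hA : 0 < A) : ∃ r, 0 < r ∧ Real.pi * r ^ 2 = A :=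
  ⟨√(A / Real.pi), Real.sqrt_pos.2 (by positivity), by
    rw [Real.sq_sqrt (by positivity)]; field_simp⟩

section Plane

/-- `f` has partial derivatives `a` and `b` at `p`. -/
abbrev HasPartials (f : Plane → ℝ) (a b : ℝ) (p : Plane) : Prop :=
  HasFDerivAt f (a • ContinuousLinearMap.fst ℝ ℝ ℝ + b • ContinuousLinearMap.snd ℝ ℝ ℝ) p

lemma sympAt_of_hasPartials {f g : Plane → ℝ} {p : Plane} {a b c d : ℝ}
    (hf : ContDiffAt ℝ ∞ f p) (hg : ContDiffAt ℝ ∞ g p) (hf' : HasPartials f a b p)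
    (hg' : HasPartials g c d p) (h : a * d - b * c = 1) :
    SympAt areaForm areaForm (fun z => (f z, g z)) p := by
  refine SympAt.of_hasFDerivAt (hf.prodMk hg) (hf'.prodMk hg') fun u v => ?_
  simp only [areaForm, ContinuousLinearMap.prod_apply, add_apply, smul_apply,
    ContinuousLinearMap.coe_fst', ContinuousLinearMap.coe_snd', smul_eq_mul]
  linear_combination (u.1 * v.2 - u.2 * v.1) * h

lemma hasPartials_comp_fst {h : ℝ → ℝ} {h' : ℝ} {p : Plane} (hh : HasDerivAt h h' p.1) :
    HasPartials (fun z => h z.1) h' 0 p :=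
  (hh.comp_hasFDerivAt p hasFDerivAt_fst).congr_fderiv (by simp)

lemma hasPartials_comp_snd {h : ℝ → ℝ} {h' : ℝ} {p : Plane} (hh : HasDerivAt h h' p.2) :
    HasPartials (fun z => h z.2) 0 h' p :=
  (hh.comp_hasFDerivAt p hasFDerivAt_snd).congr_fderiv (by simp)

lemma hasPartials_mul {f g : ℝ → ℝ} {f' g' : ℝ} {p : Plane} (hf : HasDerivAt f f' p.1)
    (hg : HasDerivAt g g' p.2) :
    HasPartials (fun z => f z.1 * g z.2) (f' * g p.2) (f p.1 * g') p :=
  ((hasPartials_comp_fst hf).mul (hasPartials_comp_snd hg)).congr_fderiv (by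
    ext <;> simp [mul_comm])

/-- The area-preserving map that reparametrises the first coordinate by `g`. -/
noncomputable def stretchFst (g : ℝ → ℝ) (z : Plane) : Plane := (g z.1, z.2 / deriv g z.1)

/-- The area-preserving map that reparametrises the second coordinate by `g`. -/
noncomputable def stretchSnd (g : ℝ → ℝ) (z : Plane) : Plane := (z.1 / deriv g z.2, g z.2)

variable {g : ℝ → ℝ} {p : Plane}

lemma sympAt_stretchFst (hg : ContDiff ℝ ∞ g) (h0 : deriv g p.1 ≠ 0) :
    SympAt areaForm areaForm (stretchFst g) p := by
  have hG : ContDiff ℝ ∞ (deriv g) := (contDiff_infty_iff_deriv.1 hg).2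
  have hd : HasDerivAt g (deriv g p.1) p.1 := (hg.differentiable (by simp) _).hasDerivAt
  have hi := ((hG.differentiable (by simp) p.1).hasDerivAt).inv h0
  have h2 := hasPartials_mul hi (hasDerivAt_id' p.2)
  refine sympAt_of_hasPartials (hg.contDiffAt.comp p contDiffAt_fst)
    (contDiffAt_snd.div (hG.contDiffAt.comp p contDiffAt_fst) h0) (hasPartials_comp_fst hd)
    (h2.congr_of_eventuallyEq (Eventually.of_forall fun z => div_eq_inv_mul _ _)) (by simp [h0])

lemma sympAt_stretchSnd (hg : ContDiff ℝ ∞ g) (h0 : deriv g p.2 ≠ 0) :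
    SympAt areaForm areaForm (stretchSnd g) p := by
  have hG : ContDiff ℝ ∞ (deriv g) := (contDiff_infty_iff_deriv.1 hg).2
  have hd : HasDerivAt g (deriv g p.2) p.2 := (hg.differentiable (by simp) _).hasDerivAt
  have hi := ((hG.differentiable (by simp) p.2).hasDerivAt).inv h0
  have h2 := hasPartials_mul (hasDerivAt_id' p.1) hi
  refine sympAt_of_hasPartials (contDiffAt_fst.div (hG.contDiffAt.comp p contDiffAt_snd) h0)
    (hg.contDiffAt.comp p contDiffAt_snd)
    (h2.congr_of_eventuallyEq (Eventually.of_forall fun z => div_eq_mul_inv _ _))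
    (hasPartials_comp_snd hd) (by simp [h0])

lemma stretchFst_injective (h : ∀ s, 0 < deriv g s) : Function.Injective (stretchFst g) := by
  intro z w hzw
  obtain ⟨h1, h2⟩ := Prod.mk.inj hzw
  have h1 := (strictMono_of_deriv_pos h).injective h1
  rw [h1, div_left_inj' (h _).ne'] at h2
  exact Prod.ext h1 h2

lemma stretchSnd_injective (h : ∀ s, 0 < deriv g s) : Function.Injective (stretchSnd g) := by
  intro z w hzw
  obtain ⟨h1, h2⟩ := Prod.mk.inj hzw
  have h2 := (strictMono_of_deriv_pos h).injective h2
  rw [h2, div_left_inj' (h _).ne'] at h1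
  exact Prod.ext h1 h2

lemma stretchFst_stretchFst_of_rightInverse {γ : ℝ → ℝ} (hγ : Continuous γ)
    (hr : Function.RightInverse γ g) (h : ∀ s, 0 < deriv g s) (z : Plane) :
    stretchFst g (stretchFst γ z) = z := by
  simp only [stretchFst, deriv_eq_inv_of_rightInverse hγ hr (h _).ne', hr z.1, div_inv_eq_mul,
    mul_div_cancel_right₀ _ (h _).ne']

/-- Translation by `c` in the first coordinate. -/
abbrev shiftFst (c : ℝ) (z : Plane) : Plane := (z.1 + c, z.2)

/-- The shear of the first coordinate by a function of the second. -/
def shear (W : ℝ → ℝ) (z : Plane) : Plane := (z.1 + W z.2, z.2)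

lemma shear_injective (W : ℝ → ℝ) : Function.Injective (shear W) := fun z w h => by
  obtain ⟨h1, h2⟩ := Prod.mk.inj h
  rw [h2, add_left_inj] at h1
  exact Prod.ext h1 h2

lemma sympAt_shear {W : ℝ → ℝ} (hW : ContDiff ℝ ∞ W) (p : Plane) :
    SympAt areaForm areaForm (shear W) p := by
  have hd := (hW.differentiable (by simp) p.2).hasDerivAt
  exact sympAt_of_hasPartials (a := 1) (b := deriv W p.2) (c := 0) (d := 1)
    (contDiffAt_fst.add (hW.contDiffAt.comp p contDiffAt_snd)) contDiffAt_snd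
    (((hasPartials_comp_fst (hasDerivAt_id' p.1)).add (hasPartials_comp_snd hd)).congr_fderiv
      (by simp)) (hasPartials_comp_snd (hasDerivAt_id' p.2)) (by ring)

/-- Symplectic polar coordinates: `(ρ, θ)` is sent to the point at angle `2πθ` on the circle
bounding a disc of area `ρ`. -/
noncomputable def polarMap (z : Plane) : Plane :=
  (√(z.1 / Real.pi) * Real.cos (2 * Real.pi * z.2), √(z.1 / Real.pi) * Real.sin (2 * Real.pi * z.2))

lemma discArea_polarMap {z : Plane} (hz : 0 ≤ z.1) : discArea (polarMap z) = z.1 := by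
  have h : √(z.1 / Real.pi) ^ 2 = z.1 / Real.pi := Real.sq_sqrt (by positivity)
  simp only [discArea, polarMap, mul_pow, ← mul_add, Real.cos_sq_add_sin_sq, h]
  field_simp

lemma sympAt_polarMap {z : Plane} (hz : 0 < z.1) : SympAt areaForm areaForm polarMap z := by
  have hq : 0 < z.1 / Real.pi := by positivity
  have hr : HasDerivAt (fun r => √(r / Real.pi)) (1 / Real.pi / (2 * √(z.1 / Real.pi))) z.1 :=
    ((hasDerivAt_id z.1).div_const _).sqrt hq.ne'
  have hr' : ContDiffAt ℝ ∞ (fun z : Plane => √(z.1 / Real.pi)) z :=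
    (contDiffAt_fst.div_const _).sqrt hq.ne'
  have hθ := (hasDerivAt_id' z.2).const_mul (2 * Real.pi)
  refine sympAt_of_hasPartials (hr'.mul (by fun_prop)) (hr'.mul (by fun_prop))
    (hasPartials_mul hr hθ.cos) (hasPartials_mul hr hθ.sin) ?_
  have hs : 0 < √(z.1 / Real.pi) := Real.sqrt_pos.2 hq
  field_simp
  linear_combination Real.cos_sq_add_sin_sq (Real.pi * 2 * z.2)

lemma polarMap_eq_polarMap {z w : Plane} (hz : 0 < z.1) (hw : 0 < w.1)
    (h : polarMap z = polarMap w) : z.1 = w.1 ∧ ∃ n : ℤ, z.2 - w.2 = n := by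
  have h1 : z.1 = w.1 := by rw [← discArea_polarMap hz.le, ← discArea_polarMap hw.le, h]
  refine ⟨h1, ?_⟩
  have hs : √(w.1 / Real.pi) ≠ 0 := (Real.sqrt_pos.2 (by positivity)).ne'
  simp only [polarMap, Prod.mk.injEq, h1, mul_right_inj' hs] at h
  have hcos : Real.cos (2 * Real.pi * z.2 - 2 * Real.pi * w.2) = 1 := by
    rw [Real.cos_sub, h.1, h.2]
    linear_combination Real.cos_sq_add_sin_sq (2 * Real.pi * w.2)
  obtain ⟨n, hn⟩ := (Real.cos_eq_one_iff _).1 hcos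
  exact ⟨n, mul_left_cancel₀ Real.two_pi_pos.ne' (by linear_combination -hn)⟩

end Plane

section Coupling

/-- The product of three planes: the fibre of the ellipsoid, its base and one stabilising factor. -/
abbrev Planes : Type := Plane × Plane × Plane

/-- The standard symplectic form on `Planes`. -/
abbrev sixForm : Planes → Planes → ℝ := prodForm areaForm (prodForm areaForm areaForm)

/-- The map that, over the point `(ρ, θ)` of the second plane, shifts the first plane by `C ρ` in
its first coordinate and the third plane by `B ρ` in its second; the change of `θ` makes it
symplectic. The summand `1 / 2` makes the factor of `deriv C` positive on strips of width `1`. -/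
noncomputable def coupling (C B : ℝ → ℝ) (p : Planes) : Planes :=
  (shiftFst (C p.2.1.1) p.1,
    (p.2.1.1, p.2.1.2 - deriv C p.2.1.1 * (p.1.2 + 1 / 2) + deriv B p.2.1.1 * p.2.2.1),
    (p.2.2.1, p.2.2.2 + B p.2.1.1))

lemma sympAt_coupling {C B : ℝ → ℝ} (hC : ContDiff ℝ ∞ C) (hB : ContDiff ℝ ∞ B) (p : Planes) :
    SympAt sixForm sixForm (coupling C B) p := by
  have hC' := (contDiff_infty_iff_deriv.1 hC).2
  have hB' := (contDiff_infty_iff_deriv.1 hB).2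
  have e : HasFDerivAt (fun p : Planes => p) (ContinuousLinearMap.id ℝ Planes) p := hasFDerivAt_id p
  have d {h : ℝ → ℝ} (hh : ContDiff ℝ ∞ h) :=
    (hh.differentiable (by simp) p.2.1.1).hasDerivAt.comp_hasFDerivAt p e.snd.fst.fst
  have hd := ((e.fst.fst.add (d hC)).prodMk e.fst.snd).prodMk
    ((e.snd.fst.fst.prodMk ((e.snd.fst.snd.sub ((d hC').mul (e.fst.snd.add_const (1 / 2)))).add
      ((d hB').mul e.snd.snd.fst))).prodMk (e.snd.snd.fst.prodMk (e.snd.snd.snd.add (d hB))))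
  refine SympAt.of_hasFDerivAt ?_ hd fun u v => ?_
  · unfold coupling
    exact ContDiff.contDiffAt (by fun_prop)
  · simp only [ContinuousLinearMap.comp_id, Function.comp_apply, one_div,
      ContinuousLinearMap.prod_apply, add_apply, ContinuousLinearMap.comp_apply,
      ContinuousLinearMap.coe_fst', smul_apply, ContinuousLinearMap.coe_snd', smul_eq_mul,
      sub_apply, prodForm, areaForm]
    ring

end Coupling

section Slice

lemma sqrt_sq_sub_sq_eq_zero {r s : ℝ} (hr : 0 ≤ r) (h : r ≤ |s|) : √(r ^ 2 - s ^ 2) = 0 :=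
  Real.sqrt_eq_zero_of_nonpos (sub_nonpos.2 (sq_abs s ▸ pow_le_pow_left₀ hr h 2))

lemma integral_disc_slices {r : ℝ} (hr : 0 ≤ r) :
    ∫ s in (-r)..r, 2 * √(r ^ 2 - s ^ 2) = Real.pi * r ^ 2 := by
  have hscale : ∀ s : ℝ, 2 * √(r ^ 2 - (r * s) ^ 2) = 2 * r * √(1 - s ^ 2) := fun s => by
    rw [show r ^ 2 - (r * s) ^ 2 = r ^ 2 * (1 - s ^ 2) by ring, Real.sqrt_mul (by positivity),
      Real.sqrt_sq hr, mul_assoc]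
  have h := intervalIntegral.smul_integral_comp_mul_left (a := -1) (b := 1)
    (fun s => 2 * √(r ^ 2 - s ^ 2)) r
  simp only [mul_neg, mul_one, smul_eq_mul, hscale, intervalIntegral.integral_const_mul,
    integral_sqrt_one_sub_sq] at h
  rw [intervalIntegral.integral_const_mul, ← h]
  ring

lemma integral_disc_slices_of_le {r a b : ℝ} (hr : 0 ≤ r) (ha : a ≤ -r) (hb : r ≤ b) :
    ∫ s in a..b, 2 * √(r ^ 2 - s ^ 2) = Real.pi * r ^ 2 := by
  have hc : Continuous fun s : ℝ => 2 * √(r ^ 2 - s ^ 2) := by fun_prop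
  have h0 : ∀ s : ℝ, r ≤ |s| → 2 * √(r ^ 2 - s ^ 2) = 0 := fun s hs => by
    rw [sqrt_sq_sub_sq_eq_zero hr hs, mul_zero]
  rw [integral_eq_of_eqOn_zero hc (b := r) fun s hs =>
      h0 s ((Set.uIcc_of_le hb ▸ hs).1.trans (le_abs_self s)),
    intervalIntegral.integral_symm,
    integral_eq_of_eqOn_zero hc (b := -r) fun s hs =>
      h0 s ((le_neg_of_le_neg (Set.uIcc_of_ge ha ▸ hs).2).trans (neg_le_abs s)),
    ← intervalIntegral.integral_symm, integral_disc_slices hr]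

/-- A smooth positive approximation of `max u 0` from above, with error at most `δ`. -/
noncomputable def softMax (δ u : ℝ) : ℝ := (u + √(u ^ 2 + δ ^ 2) + δ) / 2

lemma half_le_softMax (δ u : ℝ) : δ / 2 ≤ softMax δ u := by
  have h : |u| ≤ √(u ^ 2 + δ ^ 2) := Real.abs_le_sqrt (by nlinarith)
  unfold softMax
  linarith [neg_abs_le u]

section SoftMax

variable {δ : ℝ} (hδ : 0 < δ) (u : ℝ)
include hδ

lemma softMax_pos : 0 < softMax δ u := (half_pos hδ).trans_le (half_le_softMax δ u)

lemma lt_softMax : u < softMax δ u := by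
  have h : |u| ≤ √(u ^ 2 + δ ^ 2) := Real.abs_le_sqrt (by nlinarith)
  unfold softMax
  linarith [le_abs_self u]

lemma softMax_le : softMax δ u ≤ max u 0 + δ := by
  have h : √(u ^ 2 + δ ^ 2) ≤ |u| + δ := by
    rw [Real.sqrt_le_left (by positivity)]
    nlinarith [sq_abs u, mul_nonneg (abs_nonneg u) hδ.le]
  unfold softMax
  rcases abs_cases u with ⟨h1, h2⟩ | ⟨h1, h2⟩
  · rw [max_eq_left h2]; linarith
  · rw [max_eq_right h2.le]; linarith

lemma contDiff_softMax : ContDiff ℝ ∞ (softMax δ) := by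
  have : ContDiff ℝ ∞ fun u : ℝ => √(u ^ 2 + δ ^ 2) :=
    ContDiff.sqrt (by fun_prop) fun u => by positivity
  unfold softMax
  fun_prop

end SoftMax

/-- A smooth positive function slightly larger than the half-width `√(r² - s²)` of the slice at `s`
of the disc of radius `r`. -/
noncomputable def softSlice (r d s : ℝ) : ℝ := √(softMax (d ^ 2) (r ^ 2 - s ^ 2))

/-- The width `2 softSlice` for `s ≤ r + h`, interpolated to `2πs` for `r + 2h ≤ s`. -/
noncomputable def sliceWidth (r h d s : ℝ) : ℝ :=
  (1 - smoothStep (r + h) (r + 2 * h) s) * (2 * softSlice r d s) +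
    smoothStep (r + h) (r + 2 * h) s * (2 * Real.pi * s)

lemma half_le_softSlice (r d s : ℝ) : d / 2 ≤ softSlice r d s :=
  Real.le_sqrt_of_sq_le (by nlinarith [half_le_softMax (d ^ 2) (r ^ 2 - s ^ 2)])

section SliceWidth

variable {r R h d s : ℝ} (hd : 0 < d)

section
include hd

lemma softSlice_sq : softSlice r d s ^ 2 = softMax (d ^ 2) (r ^ 2 - s ^ 2) :=
  Real.sq_sqrt (softMax_pos (by positivity) _).le

lemma sq_lt_softSlice_sq : r ^ 2 - s ^ 2 < softSlice r d s ^ 2 :=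
  (lt_softMax (by positivity) _).trans_eq (softSlice_sq hd).symm

lemma sqrt_le_softSlice : √(r ^ 2 - s ^ 2) ≤ softSlice r d s :=
  Real.sqrt_le_sqrt (lt_softMax (by positivity) _).le

lemma softSlice_le : softSlice r d s ≤ √(r ^ 2 - s ^ 2) + d := by
  refine abs_le_of_sq_le_sq' ?_ (by positivity) |>.2
  have hmax : max (r ^ 2 - s ^ 2) 0 = √(r ^ 2 - s ^ 2) ^ 2 := by
    rcases le_total (r ^ 2 - s ^ 2) 0 with h | h
    · rw [max_eq_right h, Real.sqrt_eq_zero_of_nonpos h, zero_pow two_ne_zero]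
    · rw [max_eq_left h, Real.sq_sqrt h]
  have hle := softMax_le (sq_pos_of_pos hd) (r ^ 2 - s ^ 2)
  rw [softSlice_sq hd]
  nlinarith [mul_nonneg (Real.sqrt_nonneg (r ^ 2 - s ^ 2)) hd.le]

lemma softSlice_le_of_le (hr : 0 ≤ r) (hs : r ≤ s) : softSlice r d s ≤ d := by
  simpa [sqrt_sq_sub_sq_eq_zero hr (hs.trans (le_abs_self s))] using
    softSlice_le hd (r := r) (s := s)

lemma sq_add_softSlice_sq_le (hs : -r < s) (hs' : s < r) :
    s ^ 2 + softSlice r d s ^ 2 ≤ r ^ 2 + d ^ 2 := by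
  have hle := softMax_le (sq_pos_of_pos hd) (r ^ 2 - s ^ 2)
  rw [max_eq_left (by nlinarith)] at hle
  rw [softSlice_sq hd]
  linarith

lemma contDiff_sliceWidth : ContDiff ℝ ∞ (sliceWidth r h d) := by
  have hsoft : ContDiff ℝ ∞ (softSlice r d) :=
    ((contDiff_softMax (sq_pos_of_pos hd)).comp (by fun_prop)).sqrt fun s =>
      (softMax_pos (sq_pos_of_pos hd) _).ne'
  unfold sliceWidth
  fun_prop

end

lemma sliceWidth_of_le (hh : 0 < h) (hs : s ≤ r + h) :
    sliceWidth r h d s = 2 * softSlice r d s := by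
  simp [sliceWidth, smoothStep_eq_zero (show r + h < r + 2 * h by linarith) hs]

lemma sliceWidth_of_ge (hh : 0 < h) (hs : r + 2 * h ≤ s) :
    sliceWidth r h d s = 2 * Real.pi * s := by
  simp [sliceWidth, smoothStep_eq_one (show r + h < r + 2 * h by linarith) hs]

lemma le_sliceWidth (hh : 0 < h) : min d (2 * Real.pi * r) ≤ sliceWidth r h d s := by
  have hsoft : min d (2 * Real.pi * r) ≤ 2 * softSlice r d s := by
    linarith [min_le_left d (2 * Real.pi * r), half_le_softSlice r d s]
  rcases le_total s (r + h) with hs | hs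
  · rwa [sliceWidth_of_le hh hs]
  · have hlin : min d (2 * Real.pi * r) ≤ 2 * Real.pi * s :=
      (min_le_right _ _).trans (by gcongr; linarith)
    unfold sliceWidth
    linarith [mul_le_mul_of_nonneg_left hsoft
        (sub_nonneg.2 (smoothStep_le_one (r + h) (r + 2 * h) s)),
      mul_le_mul_of_nonneg_left hlin (smoothStep_nonneg (r + h) (r + 2 * h) s)]

include hd

lemma sliceWidth_le (hr : 0 ≤ r) (hdr : d ≤ Real.pi * r) (hs : r ≤ s) :
    sliceWidth r h d s ≤ 2 * Real.pi * s := by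
  have hsoft : 2 * softSlice r d s ≤ 2 * Real.pi * s := by
    linarith [softSlice_le_of_le hd hr hs, mul_le_mul_of_nonneg_left hs Real.pi_pos.le]
  unfold sliceWidth
  linarith [mul_le_mul_of_nonneg_left hsoft
    (sub_nonneg.2 (smoothStep_le_one (r + h) (r + 2 * h) s))]

lemma le_integral_sliceWidth (hr : 0 ≤ r) (hR : r ≤ R) (hh : 0 < h) :
    Real.pi * r ^ 2 ≤ ∫ t in (-R)..(r + h), sliceWidth r h d t := by
  rw [← integral_disc_slices_of_le hr (neg_le_neg hR) (show r ≤ r + h by linarith)]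
  refine intervalIntegral.integral_mono_on (by linarith)
    (Continuous.intervalIntegrable (by fun_prop) _ _)
    ((contDiff_sliceWidth hd).continuous.intervalIntegrable _ _) fun t ht => ?_
  rw [sliceWidth_of_le hh ht.2]
  exact mul_le_mul_of_nonneg_left (sqrt_le_softSlice hd) zero_le_two

lemma integral_sliceWidth_le (hr : 0 ≤ r) (hR : r ≤ R) (hh : 0 < h) :
    ∫ t in (-R)..(r + h), sliceWidth r h d t ≤ Real.pi * r ^ 2 + 2 * d * (R + (r + h)) := by
  have hc : Continuous fun t : ℝ => 2 * √(r ^ 2 - t ^ 2) := by fun_prop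
  calc ∫ t in (-R)..(r + h), sliceWidth r h d t
      ≤ ∫ t in (-R)..(r + h), (2 * √(r ^ 2 - t ^ 2) + 2 * d) := by
        refine intervalIntegral.integral_mono_on (by linarith)
          ((contDiff_sliceWidth hd).continuous.intervalIntegrable _ _)
          (Continuous.intervalIntegrable (by fun_prop) _ _) fun t ht => ?_
        rw [sliceWidth_of_le hh ht.2]
        linarith [softSlice_le hd (r := r) (s := t)]
    _ = Real.pi * r ^ 2 + 2 * d * (R + (r + h)) := by
        rw [intervalIntegral.integral_add (hc.intervalIntegrable _ _) (by simp),
          integral_disc_slices_of_le hr (neg_le_neg hR) (by linarith),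
          intervalIntegral.integral_const, smul_eq_mul]
        ring

lemma pi_mul_sq_sub_le_integral_sliceWidth (hr : 0 ≤ r) (hR : r ≤ R) (hh : 0 < h)
    (hs : r + h ≤ s) : Real.pi * s ^ 2 - (Real.pi * (r + 2 * h) ^ 2 - Real.pi * r ^ 2) ≤
      ∫ t in (-R)..s, sliceWidth r h d t := by
  have hi : ∀ a b, IntervalIntegrable (sliceWidth r h d) MeasureTheory.volume a b :=
    fun a b => (contDiff_sliceWidth hd).continuous.intervalIntegrable a b
  have hmono : ∀ s, r + h ≤ s → Real.pi * r ^ 2 ≤ ∫ t in (-R)..s, sliceWidth r h d t :=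
    fun s hs => (le_integral_sliceWidth hd hr hR hh).trans <|
      intervalIntegral.integral_mono_interval le_rfl (by linarith) hs
        (Eventually.of_forall fun t =>
          (le_min hd.le (by positivity)).trans (le_sliceWidth hh (s := t))) (hi _ _)
  rcases le_total s (r + 2 * h) with h1 | h1
  · have : Real.pi * s ^ 2 ≤ Real.pi * (r + 2 * h) ^ 2 := by gcongr; linarith
    linarith [hmono s hs]
  · have hlin : ∫ t in (r + 2 * h)..s, sliceWidth r h d t =
        Real.pi * (s ^ 2 - (r + 2 * h) ^ 2) := by
      rw [intervalIntegral.integral_congr fun t ht =>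
        sliceWidth_of_ge hh (Set.uIcc_of_le h1 ▸ ht).1, intervalIntegral.integral_const_mul,
        integral_id]
      ring
    linarith [hmono (r + 2 * h) (by linarith),
      intervalIntegral.integral_add_adjacent_intervals (hi (-R) (r + 2 * h)) (hi (r + 2 * h) s)]

end SliceWidth

/-- A smooth increasing function `area` whose derivative at `s` is slightly larger than the width of
the slice at `s` of the disc of radius `r`, and which follows the areas `πs²` of discs from `edge`
on. The disc lies in `[-R, ∞) × ℝ`, `e` bounds the errors in area, and `2η` the ratio of the width
to the circumference `2πs` just outside the disc. -/
structure SliceProfile (r R e η : ℝ) where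
  area : ℝ → ℝ
  inv : ℝ → ℝ
  edge : ℝ
  minWidth : ℝ
  lt_edge : r < edge
  contDiff_area : ContDiff ℝ ∞ area
  contDiff_inv : ContDiff ℝ ∞ inv
  rightInverse_inv : Function.RightInverse inv area
  minWidth_pos : 0 < minWidth
  minWidth_le : ∀ s, minWidth ≤ deriv area s
  area_neg : area (-R) = 0
  sq_lt : ∀ s ≤ edge, r ^ 2 - s ^ 2 < (deriv area s / 2) ^ 2
  sq_add_sq_lt : ∀ s, -r < s → s < r → s ^ 2 + (deriv area s / 2) ^ 2 < edge ^ 2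
  width_lt : ∀ s, r ≤ s → s ≤ edge → deriv area s < 4 * Real.pi * s * η
  width_le : ∀ s, edge ≤ s → deriv area s ≤ 2 * Real.pi * s
  area_edge_le : area edge ≤ Real.pi * r ^ 2 + e
  pi_mul_sq_le : ∀ s, edge ≤ s → Real.pi * s ^ 2 ≤ area s + e

lemma SliceProfile.deriv_area_pos {r R e η : ℝ} (S : SliceProfile r R e η) (s : ℝ) :
    0 < deriv S.area s :=
  S.minWidth_pos.trans_le (S.minWidth_le s)

lemma SliceProfile.strictMono_area {r R e η : ℝ} (S : SliceProfile r R e η) :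
    StrictMono S.area :=
  strictMono_of_deriv_pos S.deriv_area_pos

lemma nonempty_sliceProfile {r R e η : ℝ} (hr : 0 < r) (hR : r ≤ R) (he : 0 < e) (hη : 0 < η) :
    Nonempty (SliceProfile r R e η) := by
  obtain ⟨h, hhe, hh⟩ : ∃ h : ℝ, Real.pi * (r + 2 * h) ^ 2 < Real.pi * r ^ 2 + e ∧ 0 < h :=
    ((eventually_nhdsGT_lt (a := 0) (by fun_prop) (by simpa using he)).and
      self_mem_nhdsWithin).exists
  obtain ⟨d, hdh, hdη, hdr, hde, hd⟩ : ∃ d : ℝ, d ^ 2 < 2 * r * h ∧ d < 2 * Real.pi * r * η ∧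
      d < Real.pi * r ∧ 2 * d * (R + (r + h)) < e ∧ 0 < d :=
    ((eventually_nhdsGT_lt (a := 0) (by fun_prop) (by rw [zero_pow two_ne_zero]; positivity)).and <|
      (eventually_nhdsGT_lt (a := 0) (by fun_prop) (by positivity)).and <|
      (eventually_nhdsGT_lt (a := 0) (by fun_prop) (by positivity)).and <|
      (eventually_nhdsGT_lt (a := 0) (by fun_prop) (by simpa using he)).and
      self_mem_nhdsWithin).exists
  have hw := contDiff_sliceWidth hd (r := r) (h := h)
  have hderiv : deriv (fun s => ∫ t in (-R)..s, sliceWidth r h d t) = sliceWidth r h d :=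
    funext fun s => hw.continuous.deriv_integral _ _ s
  have hmin : 0 < min d (2 * Real.pi * r) := lt_min hd (by positivity)
  obtain ⟨γ, hγ, -, hr'⟩ := exists_contDiff_inverse hmin (contDiff_primitive hw (-R))
    fun s => (le_sliceWidth hh).trans_eq (congrFun hderiv s).symm
  refine ⟨⟨fun s => ∫ t in (-R)..s, sliceWidth r h d t, γ, r + h, min d (2 * Real.pi * r),
    by linarith, contDiff_primitive hw (-R), hγ, hr', hmin, fun s => ?_,
    intervalIntegral.integral_same, fun s hs => ?_, fun s h1 h2 => ?_, fun s h1 h2 => ?_,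
    fun s hs => ?_, (integral_sliceWidth_le hd hr.le hR hh).trans (by linarith), fun s hs => ?_⟩⟩
  · exact (le_sliceWidth hh).trans_eq (congrFun hderiv s).symm
  · rw [hderiv, sliceWidth_of_le hh hs, mul_div_cancel_left₀ _ two_ne_zero]
    exact sq_lt_softSlice_sq hd
  · rw [hderiv, sliceWidth_of_le hh (by linarith), mul_div_cancel_left₀ _ two_ne_zero]
    nlinarith [sq_add_softSlice_sq_le hd h1 h2]
  · rw [hderiv, sliceWidth_of_le hh h2]
    have : 2 * Real.pi * r * η ≤ 2 * Real.pi * s * η := by gcongr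
    linarith [softSlice_le_of_le hd hr.le h1]
  · exact (congrFun hderiv s).trans_le <| sliceWidth_le hd hr.le hdr.le (by linarith)
  · linarith [pi_mul_sq_sub_le_integral_sliceWidth hd hr.le hR hh hs]

end Slice

section Bend

/-- A smooth density that agrees with the derivative of `arctan (2πθ) / 2π` for `|θ| ≤ η` and is `1`
for `|θ| ≥ 2η`. -/
noncomputable def bendDensity (η θ : ℝ) : ℝ :=
  (1 + (2 * Real.pi * θ) ^ 2 * plateau (-(2 * η)) (2 * η) η θ)⁻¹

/-- The reparametrisation of angles, in turns, by which a vertical line bends into a circle. -/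
noncomputable def bendAngle (η θ : ℝ) : ℝ := ∫ t in (0 : ℝ)..θ, bendDensity η t

/-- On the right half plane, `bend` takes the vertical segment of length `2πs` at `s` to a closed
curve of nearly minimal area around the origin, and is the identity near the horizontal axis. -/
noncomputable def bend (η : ℝ) (z : Plane) : Plane :=
  polarMap (stretchSnd (bendAngle η) (stretchFst (fun s => Real.pi * s ^ 2) z))

variable {η θ : ℝ}

lemma one_le_inv_bendDensity (η θ : ℝ) :
    1 ≤ 1 + (2 * Real.pi * θ) ^ 2 * plateau (-(2 * η)) (2 * η) η θ :=
  le_add_of_nonneg_right (mul_nonneg (sq_nonneg _) plateau_nonneg)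

lemma bendDensity_pos (η θ : ℝ) : 0 < bendDensity η θ :=
  inv_pos.2 (one_pos.trans_le (one_le_inv_bendDensity η θ))

lemma bendDensity_le_one (η θ : ℝ) : bendDensity η θ ≤ 1 :=
  inv_le_one_of_one_le₀ (one_le_inv_bendDensity η θ)

lemma contDiff_bendDensity (η : ℝ) : ContDiff ℝ ∞ (bendDensity η) := by
  have := contDiff_plateau (p := -(2 * η)) (q := 2 * η) (h := η)
  exact ContDiff.inv (by fun_prop) fun θ => (one_pos.trans_le (one_le_inv_bendDensity η θ)).ne'

lemma one_le_bendDensity_mul (hη : 0 < η) (θ : ℝ) :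
    1 ≤ bendDensity η θ * (1 + 16 * Real.pi ^ 2 * η ^ 2) := by
  rw [bendDensity, inv_mul_eq_div, one_le_div (one_pos.trans_le (one_le_inv_bendDensity η θ)),
    add_le_add_iff_left]
  rcases lt_or_ge (2 * η) |θ| with h | h
  · have h0 : plateau (-(2 * η)) (2 * η) η θ = 0 := (lt_abs.1 h).elim
      (fun h => plateau_eq_zero_of_ge hη h.le)
      fun h => plateau_eq_zero_of_le hη (le_neg_of_le_neg h.le)
    rw [h0, mul_zero]
    positivity
  · calc (2 * Real.pi * θ) ^ 2 * plateau (-(2 * η)) (2 * η) η θ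
        ≤ (2 * Real.pi * θ) ^ 2 := mul_le_of_le_one_right (sq_nonneg _) plateau_le_one
      _ = 4 * Real.pi ^ 2 * |θ| ^ 2 := by rw [sq_abs]; ring
      _ ≤ 4 * Real.pi ^ 2 * (2 * η) ^ 2 := by gcongr
      _ = 16 * Real.pi ^ 2 * η ^ 2 := by ring

lemma bendDensity_eq (hη : 0 < η) (hθ : |θ| ≤ η) :
    bendDensity η θ = (1 + (2 * Real.pi * θ) ^ 2)⁻¹ := by
  obtain ⟨h1, h2⟩ := abs_le.1 hθ
  rw [bendDensity, plateau_eq_one hη (by linarith) (by linarith), mul_one]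

lemma deriv_bendAngle (η : ℝ) : deriv (bendAngle η) = bendDensity η :=
  funext fun θ => (contDiff_bendDensity η).continuous.deriv_integral _ _ θ

lemma contDiff_bendAngle (η : ℝ) : ContDiff ℝ ∞ (bendAngle η) :=
  contDiff_primitive (contDiff_bendDensity η) 0

lemma abs_bendAngle_le (η θ : ℝ) : |bendAngle η θ| ≤ |θ| :=
  abs_integral_le_of_abs_le_one (fun t => by
    rw [abs_of_pos (bendDensity_pos η t)]; exact bendDensity_le_one η t) θ

lemma injective_bendAngle (η : ℝ) : Function.Injective (bendAngle η) :=
  (strictMono_of_deriv_pos fun θ => deriv_bendAngle η ▸ bendDensity_pos η θ).injective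

lemma two_pi_mul_bendAngle (hη : 0 < η) (hθ : |θ| ≤ η) :
    2 * Real.pi * bendAngle η θ = Real.arctan (2 * Real.pi * θ) := by
  have hd (t : ℝ) : HasDerivAt (fun t => Real.arctan (2 * Real.pi * t))
      (2 * Real.pi * (1 + (2 * Real.pi * t) ^ 2)⁻¹) t :=
    ((hasDerivAt_id' t).const_mul (2 * Real.pi)).arctan.congr_deriv (by field_simp)
  have hint := intervalIntegral.integral_eq_sub_of_hasDerivAt (a := 0) (b := θ) (fun t _ => hd t)
    (Continuous.intervalIntegrable (.mul (by fun_prop)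
      (.inv₀ (by fun_prop) fun t => by positivity)) _ _)
  rw [intervalIntegral.integral_const_mul, mul_zero, Real.arctan_zero, sub_zero] at hint
  rw [← hint, bendAngle, intervalIntegral.integral_congr fun t ht => bendDensity_eq hη ?_]
  simpa using (Set.abs_sub_left_of_mem_uIcc ht).trans (by simpa using hθ)

lemma deriv_pi_mul_sq (s : ℝ) : deriv (fun s => Real.pi * s ^ 2) s = 2 * Real.pi * s := by
  rw [deriv_const_mul _ (by fun_prop), deriv_pow_field]
  ring

lemma bend_eq_polarMap (η : ℝ) (z : Plane) :
    bend η z = polarMap (Real.pi * z.1 ^ 2 / bendDensity η (z.2 / (2 * Real.pi * z.1)),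
      bendAngle η (z.2 / (2 * Real.pi * z.1))) := by
  simp only [bend, stretchSnd, stretchFst, deriv_bendAngle, deriv_pi_mul_sq]

variable {z w : Plane}

lemma sympAt_bend (η : ℝ) (hz : 0 < z.1) : SympAt areaForm areaForm (bend η) z := by
  have hpos : 0 < (stretchSnd (bendAngle η) (stretchFst (fun s => Real.pi * s ^ 2) z)).1 := by
    simp only [stretchSnd, stretchFst, deriv_bendAngle]
    exact div_pos (by positivity) (bendDensity_pos η _)
  have hfst : SympAt areaForm areaForm (stretchFst fun s => Real.pi * s ^ 2) z :=
    sympAt_stretchFst (by fun_prop) (by rw [deriv_pi_mul_sq]; positivity)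
  have hsnd (w : Plane) : SympAt areaForm areaForm (stretchSnd (bendAngle η)) w :=
    sympAt_stretchSnd (contDiff_bendAngle η) (deriv_bendAngle η ▸ (bendDensity_pos η _).ne')
  exact SympAt.comp (g := polarMap) z (sympAt_polarMap hpos) ((hsnd _).comp z hfst)

lemma discArea_bend (η : ℝ) (z : Plane) :
    discArea (bend η z) = Real.pi * z.1 ^ 2 / bendDensity η (z.2 / (2 * Real.pi * z.1)) := by
  rw [bend_eq_polarMap]
  exact discArea_polarMap (div_nonneg (by positivity) (bendDensity_pos η _).le)

lemma le_discArea_bend (η : ℝ) (z : Plane) : Real.pi * z.1 ^ 2 ≤ discArea (bend η z) := by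
  rw [discArea_bend]
  exact le_div_self (by positivity) (bendDensity_pos η _) (bendDensity_le_one η _)

lemma discArea_bend_le (hη : 0 < η) (z : Plane) :
    discArea (bend η z) ≤ Real.pi * z.1 ^ 2 * (1 + 16 * Real.pi ^ 2 * η ^ 2) := by
  rw [discArea_bend, div_le_iff₀ (bendDensity_pos η _), mul_assoc]
  exact le_mul_of_one_le_right (by positivity)
    ((one_le_bendDensity_mul hη (z.2 / (2 * Real.pi * z.1))).trans_eq (mul_comm _ _))

lemma eq_of_bend_eq_bend (hz : 0 < z.1) (hw : 0 < w.1) (hz' : |z.2 / (2 * Real.pi * z.1)| < 1 / 2)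
    (hw' : |w.2 / (2 * Real.pi * w.1)| < 1 / 2) (h : bend η z = bend η w) : z = w := by
  rw [bend_eq_polarMap, bend_eq_polarMap] at h
  obtain ⟨hρ, n, hn⟩ := polarMap_eq_polarMap (div_pos (by positivity) (bendDensity_pos η _))
    (div_pos (by positivity) (bendDensity_pos η _)) h
  have hB1 := abs_lt.1 ((abs_bendAngle_le η _).trans_lt hz')
  have hB2 := abs_lt.1 ((abs_bendAngle_le η _).trans_lt hw')
  simp only at hρ hn
  have hn0 : n = 0 := Int.abs_lt_one_iff.1 (by
    have : |(n : ℝ)| < 1 := abs_lt.2 ⟨by linarith, by linarith⟩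
    exact_mod_cast this)
  rw [hn0, Int.cast_zero, sub_eq_zero] at hn
  have hθ := injective_bendAngle η hn
  rw [hθ, div_left_inj' (bendDensity_pos η _).ne', mul_right_inj' Real.pi_pos.ne',
    pow_left_inj₀ hz.le hw.le two_ne_zero] at hρ
  rw [hρ, div_left_inj' (by positivity)] at hθ
  exact Prod.ext hρ hθ

lemma bend_eq_self (hη : 0 < η) (hz : 0 < z.1) (hz' : |z.2 / (2 * Real.pi * z.1)| ≤ η) :
    bend η z = z := by
  rw [bend_eq_polarMap]
  set θ := z.2 / (2 * Real.pi * z.1) with hθ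
  have hz2 : z.2 = z.1 * (2 * Real.pi * θ) := by rw [hθ]; field_simp
  have hradius : √(Real.pi * z.1 ^ 2 / (1 + (2 * Real.pi * θ) ^ 2)⁻¹ / Real.pi) =
      z.1 * √(1 + (2 * Real.pi * θ) ^ 2) := by
    rw [show Real.pi * z.1 ^ 2 / (1 + (2 * Real.pi * θ) ^ 2)⁻¹ / Real.pi =
      z.1 ^ 2 * (1 + (2 * Real.pi * θ) ^ 2) by field_simp, Real.sqrt_mul (by positivity),
      Real.sqrt_sq hz.le]
  have hsqrt : √(1 + (2 * Real.pi * θ) ^ 2) ≠ 0 := by positivity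
  simp only [polarMap, two_pi_mul_bendAngle hη hz', bendDensity_eq hη hz', hradius,
    Real.cos_arctan, Real.sin_arctan]
  exact Prod.ext (by simp only; field_simp) (by rw [hz2]; field_simp)

end Bend

section Shift

namespace SliceProfile

variable {r e η : ℝ} (S : SliceProfile r r e η) {z : Plane}

/-- The points to the right of `-r` within half the width `deriv area` of the horizontal axis. -/
def strip : Set Plane := {z | -r < z.1 ∧ |z.2| < deriv S.area z.1 / 2}

/-- The strip to the right of `edge`, wrapped around the disc of area `π edge²`. -/
noncomputable def wrap (z : Plane) : Plane :=
  if z.1 < S.edge then z else bend η z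

lemma pi_mul_edge_sq_le : Real.pi * S.edge ^ 2 ≤ Real.pi * r ^ 2 + 2 * e := by
  linarith [S.pi_mul_sq_le S.edge le_rfl, S.area_edge_le]

lemma wrap_of_lt (h : z.1 < S.edge) : S.wrap z = z := if_pos h

lemma wrap_of_le (h : S.edge ≤ z.1) : S.wrap z = bend η z := if_neg h.not_gt

lemma discArea_lt_of_mem_strip (hz : z ∈ S.strip) (h : z.1 < r) :
    discArea z < Real.pi * S.edge ^ 2 := by
  have hsq : z.2 ^ 2 < (deriv S.area z.1 / 2) ^ 2 := sq_lt_sq' (neg_lt_of_abs_lt hz.2)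
    (lt_of_abs_lt hz.2)
  unfold discArea
  gcongr
  linarith [S.sq_add_sq_lt z.1 hz.1 h]

section
variable (hr : 0 < r)
include hr

lemma edge_pos : 0 < S.edge := hr.trans S.lt_edge

lemma mem_strip_of_discArea_lt (hz : discArea z < Real.pi * r ^ 2) : z ∈ S.strip ∧ z.1 < r := by
  rw [discArea, mul_lt_mul_iff_right₀ Real.pi_pos] at hz
  obtain ⟨h1, h2⟩ := abs_lt.1 (abs_lt_of_sq_lt_sq (by nlinarith) hr.le : |z.1| < r)
  exact ⟨⟨h1, abs_lt_of_sq_lt_sq (by linarith [S.sq_lt z.1 (h2.le.trans S.lt_edge.le)])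
    (half_pos (S.deriv_area_pos _)).le⟩, h2⟩

lemma abs_angle_lt (hη : η ≤ 1 / 2) (hz : z ∈ S.strip) (h : r ≤ z.1) :
    |z.2 / (2 * Real.pi * z.1)| < 1 / 2 := by
  have h0 : 0 < z.1 := hr.trans_le h
  rw [abs_div, abs_of_pos (show 0 < 2 * Real.pi * z.1 by positivity), div_lt_iff₀ (by positivity)]
  rcases le_total z.1 S.edge with h1 | h1
  · have : 4 * Real.pi * z.1 * η ≤ 4 * Real.pi * z.1 * (1 / 2) := by gcongr
    linarith [S.width_lt z.1 h h1, hz.2]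
  · linarith [S.width_le z.1 h1, hz.2]

variable (hη : 0 < η)
include hη

lemma bend_eq_self (hz : z ∈ S.strip) (h : r ≤ z.1) (h' : z.1 ≤ S.edge) : bend η z = z := by
  have h0 : 0 < z.1 := hr.trans_le h
  refine _root_.bend_eq_self hη h0 ?_
  rw [abs_div, abs_of_pos (show 0 < 2 * Real.pi * z.1 by positivity), div_le_iff₀ (by positivity)]
  linarith [S.width_lt z.1 h h', hz.2]

lemma sympAt_wrap (hz : z ∈ S.strip) : SympAt areaForm areaForm S.wrap z := by
  rcases lt_or_ge z.1 S.edge with h | h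
  · refine (sympAt_id z).congr ?_
    filter_upwards [(isOpen_Iio.preimage continuous_fst).mem_nhds h] with w hw
    exact S.wrap_of_lt hw
  · refine (sympAt_bend η ((S.edge_pos hr).trans_le h)).congr ?_
    have hG : Continuous (deriv S.area) := (contDiff_infty_iff_deriv.1 S.contDiff_area).2.continuous
    filter_upwards [(isOpen_lt continuous_const continuous_fst).mem_nhds (S.lt_edge.trans_le h),
      (isOpen_lt continuous_const continuous_fst).mem_nhds hz.1,
      (isOpen_lt (f := fun w : Plane => |w.2|) (g := fun w => deriv S.area w.1 / 2)
        (by fun_prop) (by fun_prop)).mem_nhds hz.2] with w h1 h2 h3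
    rcases lt_or_ge w.1 S.edge with hw | hw
    · rw [S.wrap_of_lt hw, S.bend_eq_self hr hη ⟨h2, h3⟩ h1.le hw.le]
    · exact S.wrap_of_le hw

lemma discArea_wrap_le (hz : z ∈ S.strip) : discArea (S.wrap z) ≤
    max (Real.pi * S.edge ^ 2) (S.area z.1 + e) * (1 + 16 * Real.pi ^ 2 * η ^ 2) := by
  have hbend : Real.pi * z.1 ^ 2 ≤ max (Real.pi * S.edge ^ 2) (S.area z.1 + e) →
      discArea (bend η z) ≤
        max (Real.pi * S.edge ^ 2) (S.area z.1 + e) * (1 + 16 * Real.pi ^ 2 * η ^ 2) := fun h =>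
    (discArea_bend_le hη z).trans (by gcongr)
  rcases lt_or_ge z.1 S.edge with h | h
  · rw [S.wrap_of_lt h]
    rcases lt_or_ge z.1 r with h1 | h1
    · exact ((S.discArea_lt_of_mem_strip hz h1).le.trans (le_max_left _ _)).trans
        (le_mul_of_one_le_right (le_max_of_le_left (by positivity))
          (le_add_of_nonneg_right (by positivity)))
    · rw [S.bend_eq_self hr hη hz h1 h.le] at hbend
      have h0 : 0 ≤ z.1 := hr.le.trans h1
      exact hbend (le_max_of_le_left (by gcongr))
  · rw [S.wrap_of_le h]
    exact hbend (le_max_of_le_right (S.pi_mul_sq_le z.1 h))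

omit hη in
lemma pi_mul_edge_sq_le_discArea_wrap (h : S.edge ≤ z.1) :
    Real.pi * S.edge ^ 2 ≤ discArea (S.wrap z) := by
  have h0 := S.edge_pos hr
  rw [S.wrap_of_le h]
  exact le_trans (by gcongr) (le_discArea_bend η z)

variable (hη' : η ≤ 1 / 2)
include hη'

lemma wrap_ne_wrap {w : Plane} (hz : z ∈ S.strip) (hw : w ∈ S.strip) (h1 : z.1 < S.edge)
    (h2 : S.edge ≤ w.1) : S.wrap z ≠ S.wrap w := by
  intro h
  rcases lt_or_ge z.1 r with h3 | h3
  · have hlt := S.discArea_lt_of_mem_strip hz h3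
    rw [← S.wrap_of_lt h1, h] at hlt
    exact hlt.not_ge (S.pi_mul_edge_sq_le_discArea_wrap hr h2)
  · rw [S.wrap_of_lt h1, S.wrap_of_le h2, ← S.bend_eq_self hr hη hz h3 h1.le] at h
    have hzw := eq_of_bend_eq_bend (hr.trans_le h3) ((S.edge_pos hr).trans_le h2)
      (S.abs_angle_lt hr hη' hz h3) (S.abs_angle_lt hr hη' hw (S.lt_edge.le.trans h2)) h
    exact h2.not_gt (hzw ▸ h1)

lemma injOn_wrap : Set.InjOn S.wrap S.strip := by
  intro z hz w hw h
  rcases lt_or_ge z.1 S.edge with h1 | h1 <;> rcases lt_or_ge w.1 S.edge with h2 | h2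
  · rwa [S.wrap_of_lt h1, S.wrap_of_lt h2] at h
  · exact absurd h (S.wrap_ne_wrap hr hη hη' hz hw h1 h2)
  · exact absurd h.symm (S.wrap_ne_wrap hr hη hη' hw hz h2 h1)
  · rw [S.wrap_of_le h1, S.wrap_of_le h2] at h
    exact eq_of_bend_eq_bend ((S.edge_pos hr).trans_le h1) ((S.edge_pos hr).trans_le h2)
      (S.abs_angle_lt hr hη' hz (S.lt_edge.le.trans h1))
      (S.abs_angle_lt hr hη' hw (S.lt_edge.le.trans h2)) h

end

lemma stretchFst_area_stretchFst_inv (z : Plane) :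
    stretchFst S.area (stretchFst S.inv z) = z :=
  stretchFst_stretchFst_of_rightInverse S.contDiff_inv.continuous S.rightInverse_inv
    S.deriv_area_pos z

lemma stretchFst_inv_stretchFst_area (z : Plane) :
    stretchFst S.inv (stretchFst S.area z) = z :=
  stretchFst_injective S.deriv_area_pos (S.stretchFst_area_stretchFst_inv _)

lemma sympAt_stretchFst_area (z : Plane) : SympAt areaForm areaForm (stretchFst S.area) z :=
  sympAt_stretchFst S.contDiff_area (S.deriv_area_pos _).ne'

lemma sympAt_stretchFst_inv (z : Plane) : SympAt areaForm areaForm (stretchFst S.inv) z := by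
  refine sympAt_stretchFst S.contDiff_inv ?_
  rw [deriv_eq_inv_of_rightInverse S.contDiff_inv.continuous S.rightInverse_inv
    (S.deriv_area_pos _).ne']
  exact inv_ne_zero (S.deriv_area_pos _).ne'

end SliceProfile

/-- The half-infinite strip of width `1` to the right of the vertical axis. -/
def halfStrip : Set Plane := {z | 0 < z.1 ∧ |z.2| < 1 / 2}

lemma shiftFst_mem_halfStrip {z : Plane} {c : ℝ} (hz : z ∈ halfStrip) (hc : 0 ≤ c) :
    shiftFst c z ∈ halfStrip :=
  ⟨add_pos_of_pos_of_nonneg hz.1 hc, hz.2⟩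

lemma SliceProfile.stretchFst_area_mem_halfStrip_iff {r e η : ℝ} (S : SliceProfile r r e η)
    {z : Plane} : stretchFst S.area z ∈ halfStrip ↔ z ∈ S.strip := by
  have hpos := S.deriv_area_pos z.1
  have hfst : 0 < S.area z.1 ↔ -r < z.1 := by
    rw [← S.area_neg]; exact S.strictMono_area.lt_iff_lt
  have hsnd : |z.2 / deriv S.area z.1| < 1 / 2 ↔ |z.2| < deriv S.area z.1 / 2 := by
    rw [abs_div, abs_of_pos hpos, div_lt_iff₀ hpos, one_div_mul_eq_div]
  exact and_congr hfst hsnd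

/-- A chart of the disc of area `A` in the half strip such that the translates of the disc in the
chart, placed back in the plane, stay in discs of nearly minimal area. -/
structure DiscShift (A e : ℝ) where
  chart : Plane → Plane
  place : Plane → Plane
  sympAt_chart : ∀ z, SympAt areaForm areaForm chart z
  chart_mem : ∀ z, discArea z < A → chart z ∈ halfStrip
  sympAt_place : ∀ z ∈ halfStrip, SympAt areaForm areaForm place z
  injOn_place : Set.InjOn place halfStrip
  place_chart : ∀ z, discArea z < A → place (chart z) = z
  discArea_place_le : ∀ z, discArea z < A → ∀ c, 0 ≤ c → c ≤ A + e →
    discArea (place (shiftFst c (chart z))) ≤ A + c + e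
  lt_discArea_place : ∀ z, discArea z < A → A < discArea (place (shiftFst (A + e) (chart z)))

lemma exists_bend_error_le {B e : ℝ} (he : 0 < e) :
    ∃ η : ℝ, η ≤ 1 / 2 ∧ B * (1 + 16 * Real.pi ^ 2 * η ^ 2) < B + e ∧ 0 < η :=
  ((eventually_nhdsGT_lt (a := 0) (by fun_prop) one_half_pos).and
    ((eventually_nhdsGT_lt (by fun_prop) (by simpa using he)).and self_mem_nhdsWithin)).exists.imp
      fun _ h => ⟨h.1.le, h.2⟩

theorem nonempty_discShift {A e : ℝ} (hA : 0 < A) (he : 0 < e) : Nonempty (DiscShift A e) := by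
  obtain ⟨r, hr, rfl⟩ := exists_pi_mul_sq_eq hA
  obtain ⟨η, hη', hηe, hη⟩ :=
    exists_bend_error_le (B := 2 * (Real.pi * r ^ 2) + 2 * e) (half_pos he)
  obtain ⟨S⟩ := nonempty_sliceProfile hr le_rfl (show 0 < e / 4 by linarith) hη
  have hedge := S.pi_mul_edge_sq_le
  have hlt : Real.pi * r ^ 2 < Real.pi * S.edge ^ 2 := by have := S.lt_edge; gcongr
  have hinv : ∀ z ∈ halfStrip, stretchFst S.inv z ∈ S.strip := fun z hz =>
    S.stretchFst_area_mem_halfStrip_iff.1 ((S.stretchFst_area_stretchFst_inv z).symm ▸ hz)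
  have hchart : ∀ z, discArea z < Real.pi * r ^ 2 → stretchFst S.area z ∈ halfStrip := fun z hz =>
    S.stretchFst_area_mem_halfStrip_iff.2 (S.mem_strip_of_discArea_lt hr hz).1
  have harea (c : ℝ) (z : Plane) :
      S.area (stretchFst S.inv (shiftFst c (stretchFst S.area z))).1 = S.area z.1 + c :=
    S.rightInverse_inv _
  refine ⟨⟨stretchFst S.area, fun z => S.wrap (stretchFst S.inv z), S.sympAt_stretchFst_area,
    hchart, fun z hz => (S.sympAt_wrap hr hη (hinv z hz)).comp z (S.sympAt_stretchFst_inv z),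
    fun z hz w hw h => ?_, fun z hz => ?_, fun z hz c hc hc' => ?_, fun z hz => ?_⟩⟩
  · rw [← S.stretchFst_area_stretchFst_inv z, ← S.stretchFst_area_stretchFst_inv w,
      S.injOn_wrap hr hη hη' (hinv z hz) (hinv w hw) h]
  · rw [S.stretchFst_inv_stretchFst_area]
    exact S.wrap_of_lt ((S.mem_strip_of_discArea_lt hr hz).2.trans S.lt_edge)
  · refine (S.discArea_wrap_le hr hη (hinv _ (shiftFst_mem_halfStrip (hchart z hz) hc))).trans ?_
    have hz_le : S.area z.1 ≤ S.area S.edge :=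
      S.strictMono_area.monotone ((S.mem_strip_of_discArea_lt hr hz).2.le.trans S.lt_edge.le)
    have hmax : max (Real.pi * S.edge ^ 2) (S.area z.1 + c + e / 4) ≤
        Real.pi * r ^ 2 + c + e / 2 := max_le (by linarith) (by linarith [S.area_edge_le])
    have hκ : 0 ≤ 16 * Real.pi ^ 2 * η ^ 2 := by positivity
    rw [harea]
    nlinarith
  · refine hlt.trans_le (S.pi_mul_edge_sq_le_discArea_wrap hr (S.strictMono_area.le_iff_le.1 ?_))
    rw [harea]
    linarith [(hchart z hz).1, S.area_edge_le, show (stretchFst S.area z).1 = S.area z.1 from rfl]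

end Shift

section Tail

namespace SliceProfile

variable {r R e η : ℝ} (S : SliceProfile r R e η) {z : Plane}

lemma sympAt_stretchSnd_area (z : Plane) : SympAt areaForm areaForm (stretchSnd S.area) z :=
  sympAt_stretchSnd S.contDiff_area (S.deriv_area_pos _).ne'

lemma stretchSnd_area_mem_of_discArea_lt (hR : 0 < R) (hz : discArea z < Real.pi * R ^ 2) :
    |(stretchSnd S.area z).1| ≤ R / S.minWidth ∧ 0 < (stretchSnd S.area z).2 := by
  rw [discArea, mul_lt_mul_iff_right₀ Real.pi_pos] at hz
  have h1 : |z.1| < R := abs_lt_of_sq_lt_sq (by nlinarith) hR.le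
  have h2 : |z.2| < R := abs_lt_of_sq_lt_sq (by nlinarith) hR.le
  constructor
  · rw [stretchSnd, abs_div, abs_of_pos (S.deriv_area_pos _)]
    exact div_le_div₀ hR.le h1.le S.minWidth_pos (S.minWidth_le _)
  · rw [stretchSnd, ← S.area_neg]
    exact S.strictMono_area (neg_lt_of_abs_lt h2)

lemma stretchSnd_area_mem_of_discArea_le (hr : 0 < r) (hz : discArea z ≤ Real.pi * r ^ 2) :
    |(stretchSnd S.area z).1| ≤ 1 / 2 ∧ (stretchSnd S.area z).2 < Real.pi * r ^ 2 + e := by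
  have hpos := S.deriv_area_pos z.2
  rw [discArea, mul_le_mul_iff_right₀ Real.pi_pos] at hz
  have h2 : z.2 ≤ r := (abs_le_of_sq_le_sq' (by nlinarith) hr.le).2
  have h1 : |z.1| < deriv S.area z.2 / 2 := abs_lt_of_sq_lt_sq
    (by linarith [S.sq_lt z.2 (h2.trans S.lt_edge.le)]) (half_pos hpos).le
  constructor
  · rw [stretchSnd, abs_div, abs_of_pos hpos, div_le_iff₀ hpos]
    linarith
  · exact (S.strictMono_area (h2.trans_lt S.lt_edge)).trans_le S.area_edge_le

end SliceProfile

lemma exists_squeeze {ε V : ℝ} (hε : 0 < ε) (hV : 0 < V) :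
    ∃ k : ℝ → ℝ, ContDiff ℝ ∞ k ∧ (∀ v, 0 < deriv k v) ∧ (∀ v, |v| ≤ 1 / 2 → deriv k v = 1) ∧
      ∀ v, |v| ≤ V → |k v| < 1 / 2 + ε := by
  let κ := min 1 (ε / (4 * V))
  have hκ : 0 < κ := lt_min one_pos (by positivity)
  have hκ' : 0 ≤ 1 - κ := sub_nonneg.2 (min_le_left _ _)
  have hκV : κ * V ≤ ε / 4 := by
    calc κ * V ≤ ε / (4 * V) * V := by gcongr; exact min_le_right _ _
      _ = ε / 4 := by field_simp
  let χ := plateau (-(1 / 2 + ε / 2)) (1 / 2 + ε / 2) (ε / 2)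
  have hχ : ContDiff ℝ ∞ χ := contDiff_plateau
  have hk := contDiff_primitive hχ 0
  have hderiv (v : ℝ) : deriv (fun v => κ * v + (1 - κ) * ∫ t in (0 : ℝ)..v, χ t) v =
      κ + (1 - κ) * χ v :=
    (((hasDerivAt_id' v).const_mul κ).add
      ((hχ.continuous.integral_hasStrictDerivAt 0 v).hasDerivAt.const_mul (1 - κ))).deriv.trans
      (by rw [mul_one])
  refine ⟨fun v => κ * v + (1 - κ) * ∫ t in (0 : ℝ)..v, χ t, by fun_prop, fun v => ?_,
    fun v hv => ?_, fun v hv => ?_⟩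
  · rw [hderiv]
    exact add_pos_of_pos_of_nonneg hκ (mul_nonneg hκ' plateau_nonneg)
  · obtain ⟨h1, h2⟩ := abs_le.1 hv
    have : χ v = 1 := plateau_eq_one (by linarith) (by linarith) (by linarith)
    rw [hderiv, this]
    ring
  · have h1 : |κ * v| ≤ ε / 4 := by
      rw [abs_mul, abs_of_pos hκ]
      exact (mul_le_mul_of_nonneg_left hv hκ.le).trans hκV
    have h2 : |(1 - κ) * ∫ t in (0 : ℝ)..v, χ t| ≤ 1 / 2 + ε / 2 := by
      rw [abs_mul, abs_of_nonneg hκ']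
      exact (mul_le_of_le_one_left (abs_nonneg _) (by linarith)).trans
        (abs_integral_plateau_le (by linarith) (by linarith) v)
    linarith [abs_add_le (κ * v) ((1 - κ) * ∫ t in (0 : ℝ)..v, χ t)]

theorem exists_disc_to_strip {a B ε : ℝ} (ha : 0 < a) (hε : 0 < ε) :
    ∃ τ : Plane → Plane, (∀ z, SympAt areaForm areaForm τ z) ∧ Function.Injective τ ∧
      (∀ z, discArea z < B → |(τ z).1| < 1 / 2 + ε ∧ 0 < (τ z).2) ∧
      ∀ z, discArea z ≤ a → (τ z).2 < a + ε := by
  obtain ⟨r, hr, rfl⟩ := exists_pi_mul_sq_eq ha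
  obtain ⟨R, hR, hRB⟩ := exists_pi_mul_sq_eq (lt_max_of_lt_left ha : 0 < max _ B)
  have hrR : r ≤ R := by
    have h := (le_max_left _ _).trans_eq hRB.symm
    rw [mul_le_mul_iff_right₀ Real.pi_pos] at h
    exact (sq_le_sq₀ hr.le hR.le).1 h
  obtain ⟨S⟩ := nonempty_sliceProfile hr hrR hε one_half_pos
  obtain ⟨k, hk, hkpos, hk1, hkV⟩ := exists_squeeze hε (div_pos hR S.minWidth_pos)
  refine ⟨fun z => stretchFst k (stretchSnd S.area z), fun z =>
      (sympAt_stretchFst hk (hkpos _).ne').comp z (S.sympAt_stretchSnd_area z),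
    (stretchFst_injective hkpos).comp (stretchSnd_injective S.deriv_area_pos),
    fun z hz => ?_, fun z hz => ?_⟩
  · obtain ⟨h1, h2⟩ :=
      S.stretchSnd_area_mem_of_discArea_lt hR (hz.trans_le ((le_max_right _ _).trans_eq hRB.symm))
    exact ⟨hkV _ h1, div_pos h2 (hkpos _)⟩
  · obtain ⟨h1, h2⟩ := S.stretchSnd_area_mem_of_discArea_le hr hz
    simpa only [stretchFst, hk1 _ h1, div_one] using h2

/-- The smooth function vanishing at `q` whose slope rises from `m` to `m + M` on `[p, q]`. -/
noncomputable def bentLine (p q m M s : ℝ) : ℝ := ∫ t in q..s, (m + M * smoothStep p q t)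

section BentLine

variable {p q m M s : ℝ}

lemma contDiff_bentLine : ContDiff ℝ ∞ (bentLine p q m M) :=
  contDiff_primitive (by fun_prop) q

lemma deriv_bentLine : deriv (bentLine p q m M) s = m + M * smoothStep p q s :=
  Continuous.deriv_integral _
    (contDiff_const.add (contDiff_const.mul (contDiff_smoothStep p q))).continuous _ _

lemma le_deriv_bentLine (hM : 0 ≤ M) : m ≤ deriv (bentLine p q m M) s := by
  rw [deriv_bentLine]
  exact le_add_of_nonneg_right (mul_nonneg hM (smoothStep_nonneg _ _ _))

lemma deriv_bentLine_of_le (hpq : p < q) (h : q ≤ s) : deriv (bentLine p q m M) s = m + M := by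
  rw [deriv_bentLine, smoothStep_eq_one hpq h, mul_one]

lemma bentLine_pos_iff (hm : 0 < m) (hM : 0 ≤ M) : 0 < bentLine p q m M s ↔ q < s := by
  have h : StrictMono (bentLine p q m M) :=
    strictMono_of_deriv_pos fun _ => hm.trans_le (le_deriv_bentLine hM)
  rw [← h.lt_iff_lt (a := q), bentLine, bentLine, intervalIntegral.integral_same]

lemma le_bentLine (hM : 0 ≤ M) (hpq : p < q) (hs : s ≤ p) :
    -(m * (q - s) + M * (q - p)) ≤ bentLine p q m M s := by
  have hcont : Continuous (smoothStep p q) := (contDiff_smoothStep p q).continuous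
  have hstep : ∫ t in s..q, smoothStep p q t ≤ q - p := by
    have h0 : ∫ t in s..p, smoothStep p q t = 0 := by
      rw [integral_eq_of_eqOn_zero hcont (b := s) fun t ht =>
        smoothStep_eq_zero hpq (Set.uIcc_of_le hs ▸ ht).2, intervalIntegral.integral_same]
    rw [← intervalIntegral.integral_add_adjacent_intervals (hcont.intervalIntegrable s p)
      (hcont.intervalIntegrable p q), h0, zero_add]
    exact (intervalIntegral.integral_mono hpq.le (hcont.intervalIntegrable p q)
      intervalIntegrable_const (smoothStep_le_one p q)).trans_eq (by simp)
  rw [bentLine, intervalIntegral.integral_symm, neg_le_neg_iff,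
    intervalIntegral.integral_add intervalIntegrable_const
      ((hcont.const_mul M).intervalIntegrable _ _),
    intervalIntegral.integral_const_mul, intervalIntegral.integral_const, smul_eq_mul, mul_comm m]
  gcongr

end BentLine

theorem exists_tail {a w B ℓ δ : ℝ} (ha : 0 < a) (hw0 : 0 < w) (hw : a < 2 * w * ℓ) (hδ : 0 < δ) :
    ∃ σ : Plane → Plane, (∀ z, SympAt areaForm areaForm σ z) ∧ Function.Injective σ ∧
      ∀ z, discArea z < B → -ℓ < (σ z).2 ∧ |(σ z).1| < w ∧
        (0 < (σ z).2 → |(σ z).1| < δ ∧ a < discArea z) := by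
  obtain ⟨ε, hε', hεℓ, hε⟩ : ∃ ε : ℝ, ε < 1 / 2 ∧
      (1 + 2 * ε) / (2 * w) * (a + 2 * ε) + 1 / δ * ε < ℓ ∧ 0 < ε :=
    ((eventually_nhdsGT_lt (a := 0) (by fun_prop) one_half_pos).and
      ((eventually_nhdsGT_lt (by fun_prop) (by
        simp only [mul_zero, add_zero]
        rw [div_mul_eq_mul_div, one_mul, div_lt_iff₀ (by positivity)]
        linarith)).and self_mem_nhdsWithin)).exists
  obtain ⟨τ, hτ, hτi, hτB, hτa⟩ := exists_disc_to_strip (B := B) ha hε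
  set m := (1 + 2 * ε) / (2 * w) with hm
  have hm0 : 0 < m := by positivity
  have hM : 0 ≤ 1 / δ := by positivity
  have hpq : a + ε < a + 2 * ε := by linarith
  set Γ := bentLine (a + ε) (a + 2 * ε) m (1 / δ)
  have hmΓ (s : ℝ) : m ≤ deriv Γ s := le_deriv_bentLine hM
  have hΓ (s : ℝ) : 0 < deriv Γ s := hm0.trans_le (hmΓ s)
  refine ⟨fun z => stretchSnd Γ (τ z), fun z =>
      (sympAt_stretchSnd contDiff_bentLine (hΓ _).ne').comp z (hτ z),
    (stretchSnd_injective hΓ).comp hτi, fun z hz => ?_⟩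
  obtain ⟨hv, hs⟩ := hτB z hz
  simp only [stretchSnd, abs_div, abs_of_pos (hΓ _), div_lt_iff₀ (hΓ _)]
  refine ⟨?_, ?_, fun h => ?_⟩
  · have h0 : -(m * (a + 2 * ε - 0) + 1 / δ * (a + 2 * ε - (a + ε))) ≤ Γ 0 :=
      le_bentLine hM hpq (by positivity)
    have h1 : Γ 0 < Γ (τ z).2 := strictMono_of_deriv_pos hΓ hs
    rw [show a + 2 * ε - (a + ε) = ε by ring] at h0
    linarith
  · calc |(τ z).1| < 1 / 2 + ε := hv
      _ = w * m := by rw [hm]; field_simp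
      _ ≤ w * deriv Γ (τ z).2 := by gcongr; exact hmΓ _
  · rw [bentLine_pos_iff hm0 hM] at h
    refine ⟨?_, not_le.1 fun hle => by linarith [hτa z hle]⟩
    rw [deriv_bentLine_of_le hpq h.le, mul_add, mul_one_div_cancel hδ.ne']
    have : 0 < δ * m := by positivity
    linarith

end Tail

section Descent

/-- The displacement in the third plane, on the `n`-th turn of the fold, of a point with radius
coordinate `ρ`. -/
noncomputable def foldLift (r e : ℝ) (n : ℕ) (ρ : ℝ) : ℝ :=
  n / 2 + if Even n then smoothStep r (r + e) ρ else 1 / 2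

lemma foldLift_of_even {r e : ℝ} {n : ℕ} (hn : Even n) (ρ : ℝ) :
    foldLift r e n ρ = n / 2 + smoothStep r (r + e) ρ := by
  rw [foldLift, if_pos hn]

lemma foldLift_of_odd {r e : ℝ} {n : ℕ} (hn : ¬ Even n) (ρ : ℝ) :
    foldLift r e n ρ = ((n + 1 : ℕ) : ℝ) / 2 := by
  rw [foldLift, if_neg hn, Nat.cast_succ, add_div]

lemma contDiff_foldLift (r e : ℝ) (n : ℕ) : ContDiff ℝ ∞ (foldLift r e n) := by
  unfold foldLift; split_ifs <;> fun_prop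

lemma foldLift_add_two (r e : ℝ) (n : ℕ) (ρ : ℝ) :
    foldLift r e (n + 2) ρ = foldLift r e n ρ + 1 := by
  simp only [foldLift, Nat.even_add, even_two, iff_true, Nat.cast_add, Nat.cast_ofNat]
  ring

lemma foldLift_monotone (r e ρ : ℝ) : Monotone fun n => foldLift r e n ρ := by
  refine monotone_nat_of_le_succ fun n => ?_
  by_cases hn : Even n
  · rw [foldLift_of_even hn, foldLift_of_odd (Nat.even_add_one.not.2 (not_not.2 hn))]
    push_cast
    linarith [smoothStep_le_one r (r + e) ρ]
  · rw [foldLift_of_odd hn, foldLift_of_even (Nat.even_add_one.2 hn)]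
    exact le_add_of_nonneg_right (smoothStep_nonneg _ _ _)

lemma le_succ_of_abs_foldLift_sub_lt {r e ρ : ℝ} {n m : ℕ}
    (h : |foldLift r e n ρ - foldLift r e m ρ| < 1) : n ≤ m + 1 := by
  by_contra! hlt
  have := foldLift_monotone r e ρ hlt
  simp only [Nat.succ_eq_add_one, add_assoc, Nat.reduceAdd, foldLift_add_two] at this
  linarith [lt_of_abs_lt h]

section

variable {r e ρ : ℝ} {n : ℕ} (he : 0 < e)
include he

lemma foldLift_even_of_ge (hn : Even n) (h : r + e ≤ ρ) :
    foldLift r e n ρ = foldLift r e (n + 1) ρ := by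
  rw [foldLift_of_even hn, foldLift_of_odd (Nat.even_add_one.not.2 (not_not.2 hn)),
    smoothStep_eq_one (by linarith) h]
  push_cast
  ring

lemma foldLift_odd_of_le (hn : ¬ Even n) (h : ρ ≤ r) :
    foldLift r e n ρ = foldLift r e (n + 1) ρ := by
  rw [foldLift_of_odd hn, foldLift_of_even (Nat.even_add_one.2 hn),
    smoothStep_eq_zero (by linarith) h, add_zero]

lemma lt_of_abs_foldLift_sub_lt (hn : Even n)
    (h : |foldLift r e n ρ - foldLift r e (n + 1) ρ| < 1) : r < ρ := by
  by_contra! hle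
  rw [foldLift_of_even hn, foldLift_of_odd (Nat.even_add_one.not.2 (not_not.2 hn)),
    smoothStep_eq_zero (by linarith) hle] at h
  push_cast at h
  linarith [neg_lt_of_abs_lt h]

lemma lt_add_of_abs_foldLift_sub_lt (hn : ¬ Even n)
    (h : |foldLift r e n ρ - foldLift r e (n + 1) ρ| < 1) : ρ < r + e := by
  by_contra! hle
  rw [foldLift_of_odd hn, foldLift_of_even (Nat.even_add_one.2 hn),
    smoothStep_eq_one (by linarith) hle] at h
  linarith [neg_lt_of_abs_lt h]

lemma deriv_foldLift_even_of_gt (hn : Even n) (h : r + e < ρ) : deriv (foldLift r e n) ρ = 0 :=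
  deriv_eq_zero_of_forall_gt (fun s hs => by
    rw [foldLift_of_even hn, smoothStep_eq_one (by linarith) hs.le]) h

lemma deriv_foldLift_even_of_lt (hn : Even n) (h : ρ < r) : deriv (foldLift r e n) ρ = 0 :=
  deriv_eq_zero_of_forall_lt (fun s hs => by
    rw [foldLift_of_even hn, smoothStep_eq_zero (by linarith) hs.le]) h

end

lemma deriv_foldLift_odd {r e ρ : ℝ} {n : ℕ} (hn : ¬ Even n) : deriv (foldLift r e n) ρ = 0 := by
  rw [funext (foldLift_of_odd hn), deriv_const]

/-- The radius coordinates at which the turns `n` and `n + 1` of the fold agree. -/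
def switchSet (r e : ℝ) (n : ℕ) : Set ℝ := if Even n then Set.Ioi (2 * r) else Set.Iio e

lemma isOpen_switchSet (r e : ℝ) (n : ℕ) : IsOpen (switchSet r e n) := by
  unfold switchSet; split_ifs; exacts [isOpen_Ioi, isOpen_Iio]

lemma eqOn_foldLift {r e : ℝ} (he : 0 < e) (hr : e ≤ r) (n : ℕ) :
    Set.EqOn (foldLift r e n) (foldLift r e (n + 1)) (switchSet r e n) := by
  intro ρ hρ
  unfold switchSet at hρ
  split_ifs at hρ with hn
  · exact foldLift_even_of_ge he hn (by linarith [Set.mem_Ioi.1 hρ])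
  · exact foldLift_odd_of_le he hn (by linarith [Set.mem_Iio.1 hρ])

/-- A smooth function descending from `c` on `(-∞, p]` to `0` on `[q, ∞)` with slope at least
`-(1 - ν)`. -/
structure Descent (c p q : ℝ) where
  fn : ℝ → ℝ
  ν : ℝ
  ν_pos : 0 < ν
  ν_le_one : ν ≤ 1
  contDiff_fn : ContDiff ℝ ∞ fn
  eq_left : ∀ ρ ≤ p, fn ρ = c
  eq_right : ∀ ρ, q ≤ ρ → fn ρ = 0
  le_deriv : ∀ ρ, -(1 - ν) ≤ deriv fn ρ
  deriv_nonpos : ∀ ρ, deriv fn ρ ≤ 0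

theorem nonempty_descent {c p q : ℝ} (hc : 0 < c) (hpq : c < q - p) : Nonempty (Descent c p q) := by
  obtain ⟨h, hh, hcI⟩ : ∃ h : ℝ, 0 < h ∧ c = q - p - 4 * h :=
    ⟨(q - p - c) / 4, by linarith, by ring⟩
  set f := plateau p q h
  set I := ∫ t in p..q, f t
  have hcI : c < I := lt_of_lt_of_le (by linarith) (le_integral_plateau hh (by linarith))
  have hI : 0 < I := hc.trans hcI
  have hslope : 0 < c / I := by positivity
  have hprim : ContDiff ℝ ∞ fun ρ => ∫ t in p..ρ, f t := contDiff_primitive contDiff_plateau p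
  have hderiv (ρ : ℝ) : deriv (fun ρ => c - c / I * ∫ t in p..ρ, f t) ρ = -(c / I * f ρ) :=
    (((continuous_plateau.integral_hasStrictDerivAt p ρ).hasDerivAt.const_mul _).const_sub c).deriv
  refine ⟨⟨fun ρ => c - c / I * ∫ t in p..ρ, f t, 1 - c / I, sub_pos.2 ((div_lt_one hI).2 hcI),
    by linarith, by fun_prop, fun ρ hρ => ?_, fun ρ hρ => ?_, fun ρ => ?_, fun ρ => ?_⟩⟩
  · rw [integral_eq_of_eqOn_zero continuous_plateau (b := p) fun t ht =>
      plateau_eq_zero_of_le hh (Set.uIcc_of_ge hρ ▸ ht).2, intervalIntegral.integral_same,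
      mul_zero, sub_zero]
  · rw [integral_eq_of_eqOn_zero continuous_plateau (b := q) fun t ht =>
      plateau_eq_zero_of_ge hh (Set.uIcc_of_le hρ ▸ ht).1, div_mul_cancel₀ _ hI.ne', sub_self]
  · rw [hderiv]
    linarith [mul_le_of_le_one_right hslope.le (plateau_le_one : f ρ ≤ 1)]
  · rw [hderiv]
    exact neg_nonpos.2 (mul_nonneg hslope.le plateau_nonneg)

namespace Descent

section

variable {c p q : ℝ} (D : Descent c p q)

lemma differentiable_fn : Differentiable ℝ D.fn := D.contDiff_fn.differentiable (by simp)

lemma antitone_fn : Antitone D.fn := antitone_of_deriv_nonpos D.differentiable_fn D.deriv_nonpos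

lemma fn_nonneg (ρ : ℝ) : 0 ≤ D.fn ρ :=
  (D.eq_right (max q ρ) (le_max_left _ _)).symm.trans_le (D.antitone_fn (le_max_right _ _))

lemma fn_le (ρ : ℝ) : D.fn ρ ≤ c :=
  (D.antitone_fn (min_le_right _ _)).trans_eq (D.eq_left (min p ρ) (min_le_left _ _))

lemma monotone_fn_add : Monotone fun ρ => D.fn ρ + ρ := by
  have hD := D.differentiable_fn
  refine monotone_of_deriv_nonneg (by fun_prop) fun ρ => ?_
  rw [deriv_fun_add (hD ρ) differentiableAt_fun_id, deriv_id'']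
  linarith [D.le_deriv ρ, D.ν_pos]

lemma fn_add_le (ρ : ℝ) : D.fn ρ + ρ ≤ max q ρ := by
  simpa only [D.eq_right _ (le_max_left q ρ), zero_add] using D.monotone_fn_add (le_max_right q ρ)

lemma deriv_of_lt {ρ : ℝ} (h : ρ < p) : deriv D.fn ρ = 0 :=
  deriv_eq_zero_of_forall_lt (fun s hs => D.eq_left s hs.le) h

end

variable {c e r : ℝ} (D : Descent c e r)

/-- The displacement in the first plane, on the `n`-th turn of the fold, of a point with radius
coordinate `ρ`. -/
noncomputable def shift (n : ℕ) (ρ : ℝ) : ℝ :=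
  if n = 0 then 0 else if Even n then D.fn ρ else D.fn (ρ - r)

lemma shift_zero : D.shift 0 = fun _ => 0 := rfl

lemma shift_of_even {n : ℕ} (h0 : n ≠ 0) (hn : Even n) (ρ : ℝ) : D.shift n ρ = D.fn ρ := by
  rw [shift, if_neg h0, if_pos hn]

lemma shift_of_odd {n : ℕ} (hn : ¬ Even n) (ρ : ℝ) : D.shift n ρ = D.fn (ρ - r) := by
  rw [shift, if_neg (by rintro rfl; exact hn Even.zero), if_neg hn]

lemma shift_induction {P : (ℝ → ℝ) → Prop} (zero : P fun _ => 0) (even : P D.fn)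
    (odd : P fun ρ => D.fn (ρ - r)) (n : ℕ) : P (D.shift n) := by
  rcases eq_or_ne n 0 with rfl | h0
  · exact zero
  by_cases hn : Even n
  · rwa [funext (D.shift_of_even h0 hn)]
  · rwa [funext (D.shift_of_odd hn)]

lemma contDiff_shift (n : ℕ) : ContDiff ℝ ∞ (D.shift n) :=
  D.shift_induction contDiff_const D.contDiff_fn
    (D.contDiff_fn.comp (contDiff_id.sub contDiff_const)) n

lemma shift_nonneg (n : ℕ) (ρ : ℝ) : 0 ≤ D.shift n ρ :=
  D.shift_induction (P := fun f => ∀ ρ, 0 ≤ f ρ) (fun _ => le_rfl) D.fn_nonneg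
    (fun _ => D.fn_nonneg _) n ρ

lemma shift_le (hc : 0 ≤ c) (n : ℕ) (ρ : ℝ) : D.shift n ρ ≤ c :=
  D.shift_induction (P := fun f => ∀ ρ, f ρ ≤ c) (fun _ => hc) D.fn_le (fun _ => D.fn_le _) n ρ

lemma shift_add_le (hr : 0 ≤ r) (n : ℕ) (ρ : ℝ) : D.shift n ρ + ρ ≤ max (2 * r) ρ := by
  refine D.shift_induction (P := fun f => ∀ ρ, f ρ + ρ ≤ max (2 * r) ρ) (fun ρ => ?_) (fun ρ => ?_)
    (fun ρ => ?_) n ρ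
  · rw [zero_add]; exact le_max_right _ _
  · exact (D.fn_add_le ρ).trans (max_le_max_right _ (by linarith))
  · calc D.fn (ρ - r) + ρ = D.fn (ρ - r) + (ρ - r) + r := by ring
      _ ≤ max r (ρ - r) + r := by gcongr; exact D.fn_add_le _
      _ = max (2 * r) ρ := by rw [max_add, sub_add_cancel, two_mul]

lemma deriv_shift_mem (n : ℕ) (ρ : ℝ) :
    -(1 - D.ν) ≤ deriv (D.shift n) ρ ∧ deriv (D.shift n) ρ ≤ 0 := by
  refine D.shift_induction (P := fun f => ∀ ρ, -(1 - D.ν) ≤ deriv f ρ ∧ deriv f ρ ≤ 0)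
    (fun ρ => ?_) (fun ρ => ⟨D.le_deriv ρ, D.deriv_nonpos ρ⟩) (fun ρ => ?_) n ρ
  · rw [deriv_const]
    exact ⟨by linarith [D.ν_le_one], le_rfl⟩
  · rw [deriv_comp_sub_const]
    exact ⟨D.le_deriv _, D.deriv_nonpos _⟩

lemma shift_even_of_ge {n : ℕ} (hn : Even n) {ρ : ℝ} (h : r ≤ ρ) : D.shift n ρ = 0 := by
  rcases eq_or_ne n 0 with rfl | h0
  · rfl
  · rw [D.shift_of_even h0 hn, D.eq_right ρ h]

lemma deriv_shift_even_of_gt {n : ℕ} (hn : Even n) {ρ : ℝ} (h : r < ρ) :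
    deriv (D.shift n) ρ = 0 :=
  deriv_eq_zero_of_forall_gt (fun _ hs => D.shift_even_of_ge hn hs.le) h

lemma deriv_shift_odd {n : ℕ} (hn : ¬ Even n) (ρ : ℝ) :
    deriv (D.shift n) ρ = deriv D.fn (ρ - r) := by
  rw [funext (D.shift_of_odd hn), deriv_comp_sub_const]

lemma eqOn_shift (hr : 0 ≤ r) (n : ℕ) :
    Set.EqOn (D.shift n) (D.shift (n + 1)) (switchSet r e n) := by
  intro ρ hρ
  unfold switchSet at hρ
  split_ifs at hρ with hn
  · have hρ := Set.mem_Ioi.1 hρ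
    rw [D.shift_even_of_ge hn (by linarith),
      D.shift_of_odd (Nat.even_add_one.not.2 (not_not.2 hn)), D.eq_right _ (by linarith)]
  · have hρ := Set.mem_Iio.1 hρ
    rw [D.shift_of_odd hn, D.shift_of_even n.succ_ne_zero (Nat.even_add_one.2 hn),
      D.eq_left _ (by linarith), D.eq_left _ hρ.le]

lemma shift_of_abs_foldLift_sub_lt (he : 0 < e) {n : ℕ} {ρ : ℝ}
    (h : |foldLift r e n ρ - foldLift r e (n + 1) ρ| < 1) :
    (D.shift n ρ = 0 ∧ D.shift (n + 1) ρ = c) ∨ (D.shift n ρ = c ∧ D.shift (n + 1) ρ = 0) ∨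
      (deriv (foldLift r e n) ρ = 0 ∧ deriv (foldLift r e (n + 1)) ρ = 0 ∧
        deriv (D.shift n) ρ = 0) := by
  by_cases hn : Even n
  · have hn' := Nat.even_add_one.not.2 (not_not.2 hn)
    have hρ := lt_of_abs_foldLift_sub_lt he hn h
    rcases le_or_gt ρ (r + e) with h1 | h1
    · refine Or.inl ⟨D.shift_even_of_ge hn hρ.le, ?_⟩
      rw [D.shift_of_odd hn', D.eq_left _ (by linarith)]
    · exact Or.inr (Or.inr ⟨deriv_foldLift_even_of_gt he hn h1, deriv_foldLift_odd hn',
        D.deriv_shift_even_of_gt hn hρ⟩)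
  · have hn' := Nat.even_add_one.2 hn
    have hρ := lt_add_of_abs_foldLift_sub_lt he hn h
    refine Or.inr ?_
    rcases lt_or_ge ρ r with h1 | h1
    · refine Or.inr ⟨deriv_foldLift_odd hn, deriv_foldLift_even_of_lt he hn' h1, ?_⟩
      rw [D.deriv_shift_odd hn, D.deriv_of_lt (by linarith)]
    · refine Or.inl ⟨?_, D.shift_even_of_ge hn' h1⟩
      rw [D.shift_of_odd hn, D.eq_left _ (by linarith)]

end Descent

end Descent

section FoldLabel

/-- The index of the half period of length `T / 2` containing `s`, where all of `s < T / 2`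
has index `0`. -/
noncomputable def foldLabel (T s : ℝ) : ℕ := ⌊2 * s / T⌋₊

variable {T s : ℝ} {n : ℕ} (hT : 0 < T)
include hT

lemma foldLabel_eq_iff :
    foldLabel T s = n ↔ (n ≠ 0 → n * T / 2 ≤ s) ∧ s < (n + 1) * T / 2 := by
  unfold foldLabel
  rcases eq_or_ne n 0 with rfl | hn
  · rw [Nat.floor_eq_zero, div_lt_one hT, Nat.cast_zero, zero_add, one_mul, lt_div_iff₀ two_pos,
      mul_comm]
    exact ⟨fun h => ⟨fun h0 => (h0 rfl).elim, h⟩, And.right⟩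
  · rw [Nat.floor_eq_iff' hn, le_div_iff₀ hT, div_lt_iff₀ hT, div_le_iff₀' two_pos,
      lt_div_iff₀' two_pos]
    exact and_congr_left' ⟨fun h _ => h, fun h => h hn⟩

lemma pos_of_foldLabel_ne_zero (h : foldLabel T s ≠ 0) : 0 < s := by
  have hle := ((foldLabel_eq_iff hT).1 rfl).1 h
  have hpos : (0 : ℝ) < foldLabel T s := by exact_mod_cast Nat.pos_of_ne_zero h
  exact lt_of_lt_of_le (by positivity) hle

lemma eventually_foldLabel_eq (hs : ∀ m : ℕ, s ≠ (m + 1) * T / 2) :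
    ∀ᶠ t in 𝓝 s, foldLabel T t = foldLabel T s := by
  obtain ⟨hle, hlt⟩ := (foldLabel_eq_iff hT).1 (rfl : foldLabel T s = foldLabel T s)
  have hlo : ∀ᶠ t in 𝓝 s, foldLabel T s ≠ 0 → foldLabel T s * T / 2 ≤ t := by
    refine eventually_imp_distrib_left.2 fun h0 => ?_
    obtain ⟨m, hm⟩ := Nat.exists_eq_succ_of_ne_zero h0
    refine (lt_mem_nhds (lt_of_le_of_ne (hle h0) fun h => hs m ?_)).mono fun _ => le_of_lt
    rw [← h, hm, Nat.cast_succ]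
  filter_upwards [hlo, gt_mem_nhds hlt] with t h1 h2
  exact (foldLabel_eq_iff hT).2 ⟨h1, h2⟩

lemma eventually_foldLabel_eq_or_eq_succ (n : ℕ) :
    ∀ᶠ t in 𝓝 ((n + 1) * T / 2), foldLabel T t = n ∨ foldLabel T t = n + 1 := by
  have hlo : n * T / 2 < (n + 1) * T / 2 := by linarith
  have hup : (n + 1) * T / 2 < ((n + 1 : ℕ) + 1) * T / 2 := by push_cast; linarith
  filter_upwards [lt_mem_nhds hlo, gt_mem_nhds hup] with t h1 h2
  rcases lt_or_ge t ((n + 1) * T / 2) with h | h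
  · exact Or.inl ((foldLabel_eq_iff hT).2 ⟨fun _ => h1.le, h⟩)
  · exact Or.inr ((foldLabel_eq_iff hT).2 ⟨fun _ => by exact_mod_cast h, h2⟩)

end FoldLabel

section Fold

/-- The data of a fold: the strip coordinate starts above `-ℓ`, and a full turn in the polar
coordinates of the second plane lets it grow by the period `T`. -/
structure Fold (A e ℓ : ℝ) where
  pos_area : 0 < A
  pos_error : 0 < e
  toShift : DiscShift A e
  descent : Descent (A + e) e (A + 3 * e)
  T : ℝ
  T_pos : 0 < T
  T_le : T ≤ descent.ν
  add_T_lt : ℓ + T < 1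

theorem nonempty_fold {A e ℓ : ℝ} (hA : 0 < A) (he : 0 < e) (hℓ : ℓ < 1) :
    Nonempty (Fold A e ℓ) := by
  obtain ⟨S⟩ := nonempty_discShift hA he
  obtain ⟨D⟩ := nonempty_descent (c := A + e) (p := e) (q := A + 3 * e) (by linarith) (by linarith)
  exact ⟨⟨hA, he, S, D, min D.ν ((1 - ℓ) / 2), lt_min D.ν_pos (by linarith), min_le_left _ _,
    by linarith [min_le_right D.ν ((1 - ℓ) / 2)]⟩⟩

namespace Fold

variable {A e ℓ : ℝ} (F : Fold A e ℓ) {n m : ℕ} {p q : Planes}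

/-- The displacement in the first plane on the `n`-th turn. -/
noncomputable abbrev shift (n : ℕ) : ℝ → ℝ := F.descent.shift n

/-- The displacement in the third plane on the `n`-th turn. -/
noncomputable abbrev lift (_ : Fold A e ℓ) (n : ℕ) : ℝ → ℝ := foldLift (A + 3 * e) e n

/-- The chart of the first plane on the `n`-th turn: none is needed before the folding starts. -/
def chart (n : ℕ) : Plane → Plane := if n = 0 then id else F.toShift.chart

/-- The inverse of `Fold.chart`. -/
def place (n : ℕ) : Plane → Plane := if n = 0 then id else F.toShift.place

/-- The `n`-th turn of the fold before polar coordinates are applied. -/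
noncomputable def coupled (n : ℕ) (p : Planes) : Planes :=
  coupling (F.shift n) (F.lift n) (F.chart n p.1, p.2)

/-- The `n`-th turn of the fold. -/
noncomputable def turn (n : ℕ) (p : Planes) : Planes :=
  (F.place n (F.coupled n p).1, polarMap (F.coupled n p).2.1, (F.coupled n p).2.2)

/-- The fold: the coordinates of the second plane are an area `ρ` and a strip coordinate `θ`, and
the turn is determined by `θ`. -/
noncomputable def map (p : Planes) : Planes := F.turn (foldLabel F.T p.2.1.2) p

/-- The points at which consecutive turns of the fold fit together. -/
structure Domain (p : Planes) : Prop where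
  radius_pos : 0 < p.2.1.1
  lower : -ℓ < p.2.1.2
  height : |p.2.2.2| < 1 / 2
  disc : 0 < p.2.1.2 → discArea p.1 < A
  base : p.2.1.2 ≤ 0 → p.2.1.1 < A + 3 * e
  switch : ∀ n : ℕ, p.2.1.2 = (n + 1) * F.T / 2 → p.2.1.1 ∈ switchSet (A + 3 * e) e n

lemma sympAt_turn (hρ : 0 < p.2.1.1) (hp : n ≠ 0 → discArea p.1 < A) :
    SympAt sixForm sixForm (F.turn n) p := by
  have hchart : SympAt areaForm areaForm (F.chart n) p.1 := by
    unfold chart; split_ifs; exacts [sympAt_id _, F.toShift.sympAt_chart _]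
  have hplace : SympAt areaForm areaForm (F.place n) (F.coupled n p).1 := by
    unfold place coupled chart coupling
    split_ifs with h
    · exact sympAt_id _
    · exact F.toShift.sympAt_place _ (shiftFst_mem_halfStrip (F.toShift.chart_mem _ (hp h))
        (F.descent.shift_nonneg _ _))
  have hcoupled : SympAt sixForm sixForm (F.coupled n) p :=
    (sympAt_coupling (F.descent.contDiff_shift n) (contDiff_foldLift _ _ n) _).comp p
      (hchart.prodMap (sympAt_id _))
  have hpolar : SympAt (prodForm areaForm areaForm) (prodForm areaForm areaForm)
      (fun z : Plane × Plane => (polarMap z.1, z.2)) (F.coupled n p).2 :=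
    SympAt.prodMap (p := (F.coupled n p).2) (sympAt_polarMap hρ) (sympAt_id _)
  exact (hplace.prodMap hpolar).comp p hcoupled

lemma turn_zero_fst (p : Planes) : (F.turn 0 p).1 = p.1 := Prod.ext (add_zero _) rfl

lemma turn_fst (hp : discArea p.1 < A) :
    (F.turn n p).1 = F.toShift.place (shiftFst (F.shift n p.2.1.1) (F.toShift.chart p.1)) := by
  rcases eq_or_ne n 0 with rfl | hn
  · rw [turn_zero_fst, shift, Descent.shift_zero, shiftFst, add_zero, Prod.mk.eta,
      F.toShift.place_chart _ hp]
  · simp [turn, place, coupled, coupling, chart, hn]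

lemma coupled_angle (n : ℕ) (p : Planes) : (F.coupled n p).2.1.2 =
    p.2.1.2 - deriv (F.shift n) p.2.1.1 * ((F.toShift.chart p.1).2 + 1 / 2) +
      deriv (F.lift n) p.2.1.1 * p.2.2.1 := by
  rcases eq_or_ne n 0 with rfl | hn
  · simp [coupled, coupling, Descent.shift_zero]
  · simp [coupled, coupling, chart, hn]

lemma turn_eq_turn_succ (hp : discArea p.1 < A) (hρ : p.2.1.1 ∈ switchSet (A + 3 * e) e n) :
    F.turn n p = F.turn (n + 1) p := by
  have hA := F.pos_area
  have he := F.pos_error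
  have hshift : Set.EqOn (F.shift n) (F.shift (n + 1)) (switchSet (A + 3 * e) e n) :=
    F.descent.eqOn_shift (by linarith) n
  have hlift : Set.EqOn (F.lift n) (F.lift (n + 1)) (switchSet (A + 3 * e) e n) :=
    eqOn_foldLift he (by linarith) n
  have hangle : (F.coupled n p).2.1 = (F.coupled (n + 1) p).2.1 := by
    refine Prod.ext rfl ?_
    rw [coupled_angle, coupled_angle, hshift.deriv (isOpen_switchSet _ _ _) hρ,
      hlift.deriv (isOpen_switchSet _ _ _) hρ]
  refine Prod.ext ?_ (Prod.ext (congrArg polarMap hangle) (Prod.ext rfl ?_))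
  · rw [F.turn_fst hp, F.turn_fst hp, hshift hρ]
  · exact congrArg (p.2.2.2 + ·) (hlift hρ)

variable {F}

lemma Domain.disc_of_label (hp : F.Domain p) (h : foldLabel F.T p.2.1.2 ≠ 0) : discArea p.1 < A :=
  hp.disc (pos_of_foldLabel_ne_zero F.T_pos h)

theorem sympAt_map (hp : F.Domain p) : SympAt sixForm sixForm F.map p := by
  have hturn : SympAt sixForm sixForm (F.turn (foldLabel F.T p.2.1.2)) p :=
    F.sympAt_turn hp.radius_pos hp.disc_of_label
  have hθ : Tendsto (fun q : Planes => q.2.1.2) (𝓝 p) (𝓝 p.2.1.2) :=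
    (show Continuous fun q : Planes => q.2.1.2 by fun_prop).continuousAt
  refine hturn.congr ?_
  by_cases hcross : ∃ n : ℕ, p.2.1.2 = (n + 1) * F.T / 2
  · obtain ⟨n, hn⟩ := hcross
    have hpos : 0 < p.2.1.2 := by have := F.T_pos; rw [hn]; positivity
    have hlabel : foldLabel F.T p.2.1.2 = n + 1 :=
      (foldLabel_eq_iff F.T_pos).2 ⟨fun _ => by rw [hn, Nat.cast_succ], by
        rw [hn, Nat.cast_succ]; linarith [F.T_pos]⟩
    have hdisc : ∀ᶠ q : Planes in 𝓝 p, discArea q.1 < A :=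
      (continuous_discArea.comp continuous_fst).continuousAt.eventually_lt continuousAt_const
        (hp.disc hpos)
    have hρ : ∀ᶠ q : Planes in 𝓝 p, q.2.1.1 ∈ switchSet (A + 3 * e) e n :=
      (show Continuous fun q : Planes => q.2.1.1 by fun_prop).continuousAt.eventually_mem
        ((isOpen_switchSet _ _ _).mem_nhds (hp.switch n hn))
    filter_upwards [hdisc, hρ,
      hθ.eventually (hn ▸ eventually_foldLabel_eq_or_eq_succ F.T_pos n)] with q h1 h2 h3
    rw [hlabel, map]
    rcases h3 with h3 | h3 <;> rw [h3]
    exact F.turn_eq_turn_succ h1 h2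
  · filter_upwards [hθ.eventually (eventually_foldLabel_eq F.T_pos (not_exists.1 hcross))] with q hq
    rw [map, hq]

section Injective

variable (hp : F.Domain p) (hq : F.Domain q)
include hp hq

lemma polar_of_turn_eq (h : F.turn n p = F.turn m q) :
    p.2.1.1 = q.2.1.1 ∧ ∃ k : ℤ, (F.coupled n p).2.1.2 - (F.coupled m q).2.1.2 = k :=
  polarMap_eq_polarMap (z := (F.coupled n p).2.1) (w := (F.coupled m q).2.1) hp.radius_pos
    hq.radius_pos (congrArg (fun z : Planes => z.2.1) h)

lemma abs_lift_sub_lt_of_turn_eq (h : F.turn n p = F.turn m q) :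
    |F.lift n p.2.1.1 - F.lift m p.2.1.1| < 1 := by
  have hsum : p.2.2.2 + F.lift n p.2.1.1 = q.2.2.2 + F.lift m q.2.1.1 :=
    congrArg (fun z : Planes => z.2.2.2) h
  rw [← (polar_of_turn_eq hp hq h).1] at hsum
  have h1 := abs_lt.1 hp.height
  have h2 := abs_lt.1 hq.height
  rw [abs_lt]
  constructor <;> linarith

lemma pos_of_turn_eq_turn_succ (hn : foldLabel F.T p.2.1.2 = n)
    (h : F.turn n p = F.turn (n + 1) q) : 0 < p.2.1.2 := by
  rcases eq_or_ne n 0 with rfl | h0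
  · by_contra! hle
    have := lt_of_abs_foldLift_sub_lt F.pos_error Even.zero (abs_lift_sub_lt_of_turn_eq hp hq h)
    linarith [hp.base hle]
  · exact pos_of_foldLabel_ne_zero F.T_pos (hn ▸ h0)

end Injective

lemma place_chart_ne_place_shift {z w : Plane} (hz : discArea z < A) (hw : discArea w < A) :
    F.toShift.place (shiftFst 0 (F.toShift.chart z)) ≠
      F.toShift.place (shiftFst (A + e) (F.toShift.chart w)) := fun h => by
  have := F.toShift.lt_discArea_place w hw
  rw [← h, shiftFst, add_zero, Prod.mk.eta, F.toShift.place_chart z hz] at this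
  linarith

lemma twist_mem (n : ℕ) (ρ : ℝ) {z : Plane} (hz : discArea z < A) :
    0 ≤ -deriv (F.shift n) ρ * ((F.toShift.chart z).2 + 1 / 2) ∧
      -deriv (F.shift n) ρ * ((F.toShift.chart z).2 + 1 / 2) ≤ 1 - F.T := by
  obtain ⟨hlo, hup⟩ := F.descent.deriv_shift_mem n ρ
  obtain ⟨h1, h2⟩ := abs_lt.1 (F.toShift.chart_mem z hz).2
  refine ⟨mul_nonneg (by linarith) (by linarith), ?_⟩
  calc -deriv (F.shift n) ρ * ((F.toShift.chart z).2 + 1 / 2)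
      ≤ -deriv (F.shift n) ρ := mul_le_of_le_one_right (by linarith) (by linarith)
    _ ≤ 1 - F.T := by linarith [F.T_le]

lemma turn_ne_turn_succ (hp : F.Domain p) (hq : F.Domain q) (hn : foldLabel F.T p.2.1.2 = n)
    (hm : foldLabel F.T q.2.1.2 = n + 1) : F.turn n p ≠ F.turn (n + 1) q := fun h => by
  obtain ⟨hρ, k, hk⟩ := polar_of_turn_eq hp hq h
  have hpA := hp.disc (pos_of_turn_eq_turn_succ hp hq hn h)
  have hqA := hq.disc_of_label (hm ▸ n.succ_ne_zero)
  have hfst := congrArg Prod.fst h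
  rw [F.turn_fst hpA, F.turn_fst hqA, ← hρ] at hfst
  rcases F.descent.shift_of_abs_foldLift_sub_lt F.pos_error (abs_lift_sub_lt_of_turn_eq hp hq h)
    with ⟨h0, h1⟩ | ⟨h1, h0⟩ | ⟨hlift, hlift', hshift⟩
  · exact place_chart_ne_place_shift hpA hqA (by rwa [shift, h0, shift, h1] at hfst)
  · exact place_chart_ne_place_shift hqA hpA (by rwa [shift, h1, shift, h0, eq_comm] at hfst)
  -- The strip coordinates of `p` and `q` differ by less than `T`, and the twist of `q` by less than
  -- `1 - T`, so the angles cannot differ by a nonzero integer.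
  · obtain ⟨hp_le, hp_lt⟩ := (foldLabel_eq_iff F.T_pos).1 hn
    obtain ⟨hq_le, hq_lt⟩ := (foldLabel_eq_iff F.T_pos).1 hm
    have hq_le := hq_le n.succ_ne_zero
    have hp_pos := pos_of_turn_eq_turn_succ hp hq hn h
    have hlt_T : q.2.1.2 - p.2.1.2 < F.T := by
      rcases eq_or_ne n 0 with rfl | h0
      · push_cast at hq_lt; linarith
      · push_cast at hq_lt; linarith [hp_le h0]
    obtain ⟨htwist, htwist'⟩ := twist_mem (F := F) (n + 1) p.2.1.1 hqA
    rw [coupled_angle, coupled_angle, ← hρ, hlift, hlift', hshift] at hk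
    push_cast at hq_le
    have hk_neg : k < 0 := by exact_mod_cast (by linarith : (k : ℝ) < 0)
    have hk_gt : -1 < k := by exact_mod_cast (by linarith : (-1 : ℝ) < k)
    omega

lemma fst_eq_of_turn_eq (hp : F.Domain p) (hq : F.Domain q) (hn : foldLabel F.T p.2.1.2 = n)
    (hm : foldLabel F.T q.2.1.2 = n) (h : F.turn n p = F.turn n q) : p.1 = q.1 := by
  have hfst := congrArg Prod.fst h
  rcases eq_or_ne n 0 with rfl | h0
  · rwa [turn_zero_fst, turn_zero_fst] at hfst
  · have hpA := hp.disc_of_label (hn ▸ h0)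
    have hqA := hq.disc_of_label (hm ▸ h0)
    rw [F.turn_fst hpA, F.turn_fst hqA, ← (polar_of_turn_eq hp hq h).1] at hfst
    have hc := F.descent.shift_nonneg n p.2.1.1
    have hchart := F.toShift.injOn_place
      (shiftFst_mem_halfStrip (F.toShift.chart_mem _ hpA) hc)
      (shiftFst_mem_halfStrip (F.toShift.chart_mem _ hqA) hc) hfst
    simp only [shiftFst, Prod.mk.injEq, add_left_inj] at hchart
    rw [← F.toShift.place_chart _ hpA, ← F.toShift.place_chart _ hqA, Prod.ext hchart.1 hchart.2]

lemma abs_strip_sub_lt (hp : F.Domain p) (hq : F.Domain q) (hn : foldLabel F.T p.2.1.2 = n)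
    (hm : foldLabel F.T q.2.1.2 = n) : |p.2.1.2 - q.2.1.2| < 1 := by
  obtain ⟨hp_le, hp_lt⟩ := (foldLabel_eq_iff F.T_pos).1 hn
  obtain ⟨hq_le, hq_lt⟩ := (foldLabel_eq_iff F.T_pos).1 hm
  have hT := F.add_T_lt
  rw [abs_lt]
  rcases eq_or_ne n 0 with rfl | h0
  · push_cast at hp_lt hq_lt
    constructor <;> linarith [hp.lower, hq.lower, F.T_pos]
  · constructor <;>
      linarith [hp_le h0, hq_le h0, F.T_le, F.descent.ν_le_one, F.T_pos]

theorem injOn_map : Set.InjOn F.map {p | F.Domain p} := by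
  intro p hp q hq h
  have hlabel : foldLabel F.T p.2.1.2 = foldLabel F.T q.2.1.2 := by
    have h1 := le_succ_of_abs_foldLift_sub_lt (abs_lift_sub_lt_of_turn_eq hp hq h)
    have h2 := le_succ_of_abs_foldLift_sub_lt (abs_lift_sub_lt_of_turn_eq hq hp h.symm)
    have h3 : foldLabel F.T q.2.1.2 ≠ foldLabel F.T p.2.1.2 + 1 := fun hs =>
      turn_ne_turn_succ hp hq rfl hs (hs ▸ h)
    have h4 : foldLabel F.T p.2.1.2 ≠ foldLabel F.T q.2.1.2 + 1 := fun hs =>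
      turn_ne_turn_succ hq hp rfl hs (hs ▸ h.symm)
    omega
  obtain ⟨n, hn⟩ : ∃ n, foldLabel F.T p.2.1.2 = n := ⟨_, rfl⟩
  have hm := hlabel ▸ hn
  replace h : F.turn n p = F.turn n q := by rwa [map, map, hn, hm] at h
  obtain ⟨hρ, k, hk⟩ := polar_of_turn_eq hp hq h
  have hfst := fst_eq_of_turn_eq hp hq hn hm h
  have hx : p.2.2.1 = q.2.2.1 := (congrArg (fun z : Planes => z.2.2.1) h :)
  have hy : p.2.2.2 + F.lift n p.2.1.1 = q.2.2.2 + F.lift n q.2.1.1 :=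
    congrArg (fun z : Planes => z.2.2.2) h
  have hθ : p.2.1.2 - q.2.1.2 = k := by
    rw [coupled_angle, coupled_angle, hρ, hx, hfst] at hk
    linarith
  have hk0 : k = 0 := Int.abs_lt_one_iff.1 (by exact_mod_cast hθ ▸ abs_strip_sub_lt hp hq hn hm)
  rw [hk0, Int.cast_zero, sub_eq_zero] at hθ
  rw [hρ, add_left_inj] at hy
  exact Prod.ext hfst (Prod.ext (Prod.ext hρ hθ) (Prod.ext hx hy))

lemma discArea_map_snd (hp : F.Domain p) : discArea (F.map p).2.1 = p.2.1.1 :=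
  discArea_polarMap hp.radius_pos.le

theorem discArea_map_of_nonpos (hp : F.Domain p) (hθ : p.2.1.2 ≤ 0) :
    discArea (F.map p).1 + discArea (F.map p).2.1 = discArea p.1 + p.2.1.1 := by
  have hlabel : foldLabel F.T p.2.1.2 = 0 := by
    by_contra h
    exact (pos_of_foldLabel_ne_zero F.T_pos h).not_ge hθ
  rw [discArea_map_snd hp, map, hlabel, turn_zero_fst]

theorem discArea_map_le_of_pos (hp : F.Domain p) (hθ : 0 < p.2.1.2) :
    discArea (F.map p).1 + discArea (F.map p).2.1 ≤ A + e + max (2 * (A + 3 * e)) p.2.1.1 := by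
  have hA := F.pos_area
  have he := F.pos_error
  rw [discArea_map_snd hp, map, F.turn_fst (hp.disc hθ)]
  calc _ ≤ A + F.shift (foldLabel F.T p.2.1.2) p.2.1.1 + e + p.2.1.1 := by
        gcongr
        exact F.toShift.discArea_place_le _ (hp.disc hθ) _ (F.descent.shift_nonneg _ _)
          (F.descent.shift_le (by linarith) _ _)
    _ = A + e + (F.shift (foldLabel F.T p.2.1.2) p.2.1.1 + p.2.1.1) := by ring
    _ ≤ _ := by gcongr; exact F.descent.shift_add_le (by linarith) _ _

end Fold

end Fold

section Width

/-- A width that equals `w₀` for `s ≤ 0` and oscillates between `m` and `M` with period `T` for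
`s ≥ T / 4`. -/
noncomputable def width (w₀ m M T s : ℝ) : ℝ :=
  AffineMap.lineMap w₀ (AffineMap.lineMap m M ((1 - Real.cos (2 * Real.pi * s / T)) / 2))
    (smoothStep 0 (T / 4) s)

variable {w₀ m M T s : ℝ}

lemma contDiff_width : ContDiff ℝ ∞ (width w₀ m M T) := by
  have := contDiff_smoothStep 0 (T / 4)
  unfold width
  simp only [AffineMap.lineMap_apply_ring']
  fun_prop

lemma width_mem_Icc (h : w₀ ∈ Set.Icc m M) : width w₀ m M T s ∈ Set.Icc m M := by
  have hmM := h.1.trans h.2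
  have hcos := Real.cos_mem_Icc (2 * Real.pi * s / T)
  exact (convex_Icc m M).lineMap_mem h ((convex_Icc m M).lineMap_mem (Set.left_mem_Icc.2 hmM)
    (Set.right_mem_Icc.2 hmM) ⟨by linarith [hcos.2], by linarith [hcos.1]⟩)
    ⟨smoothStep_nonneg _ _ _, smoothStep_le_one _ _ _⟩

variable (hT : 0 < T)
include hT

lemma width_of_nonpos (hs : s ≤ 0) : width w₀ m M T s = w₀ := by
  rw [width, smoothStep_eq_zero (by positivity) hs, AffineMap.lineMap_apply_zero]

lemma width_half_period (n : ℕ) :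
    width w₀ m M T ((n + 1) * T / 2) = if Even n then M else m := by
  have hstep : smoothStep 0 (T / 4) ((n + 1) * T / 2) = 1 :=
    smoothStep_eq_one (by positivity) (by nlinarith [n.cast_nonneg (α := ℝ)])
  have hcos : Real.cos (2 * Real.pi * ((n + 1) * T / 2) / T) = (-1) ^ (n + 1) := by
    rw [← Real.cos_nat_mul_pi]
    congr 1
    push_cast
    field_simp
  rw [width, hstep, hcos, AffineMap.lineMap_apply_one]
  split_ifs with hn
  · rw [hn.add_one.neg_one_pow, sub_neg_eq_add, one_add_one_eq_two, div_self two_ne_zero,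
      AffineMap.lineMap_apply_one]
  · rw [(Nat.even_add_one.2 hn).neg_one_pow, sub_self, zero_div, AffineMap.lineMap_apply_zero]

end Width

lemma exists_plane_to_strip : ∃ ψ : Plane → Plane, (∀ z, SympAt areaForm areaForm ψ z) ∧
    Function.Injective ψ ∧ ∀ z, |(ψ z).2| < 1 / 2 := by
  have hderiv (s : ℝ) : 0 < deriv (fun s => Real.arctan s / Real.pi) s := by
    rw [((Real.hasDerivAt_arctan s).div_const Real.pi).deriv]; positivity
  refine ⟨stretchSnd fun s => Real.arctan s / Real.pi, fun z => sympAt_stretchSnd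
    (Real.contDiff_arctan.div_const _) (hderiv _).ne', stretchSnd_injective hderiv, fun z => ?_⟩
  have h1 := Real.neg_pi_div_two_lt_arctan z.2
  have h2 := Real.arctan_lt_pi_div_two z.2
  change |Real.arctan z.2 / Real.pi| < 1 / 2
  rw [abs_lt, lt_div_iff₀ Real.pi_pos, div_lt_iff₀ Real.pi_pos]
  constructor <;> linarith

namespace Fold

variable {A e ℓ : ℝ} (F : Fold A e ℓ)

/-- The width added to a thin tail so that it enters the domain of the fold. -/
noncomputable abbrev tailWidth : ℝ → ℝ := width ((A + e) / 2) (e / 2) (2 * (A + 3 * e) + e / 2) F.T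

lemma tailWidth_mem_Icc (s : ℝ) : F.tailWidth s ∈ Set.Icc (e / 2) (2 * (A + 3 * e) + e / 2) := by
  have hA := F.pos_area
  have he := F.pos_error
  exact width_mem_Icc ⟨by linarith, by linarith⟩

lemma domain_shear {z t w : Plane} (hs : -ℓ < t.2) (ht : |t.1| < A / 2)
    (htail : 0 < t.2 → |t.1| < e / 4) (hz : 0 < t.2 → discArea z < A) (hw : |w.2| < 1 / 2) :
    F.Domain (z, shear F.tailWidth t, w) := by
  have he := F.pos_error
  obtain ⟨ht1, ht2⟩ := abs_lt.1 ht
  have hwidth (h : t.2 ≤ 0) : F.tailWidth t.2 = (A + e) / 2 := width_of_nonpos F.T_pos h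
  refine ⟨?_, hs, hw, hz, fun h => ?_, fun n h => ?_⟩
  · change 0 < t.1 + F.tailWidth t.2
    rcases le_or_gt t.2 0 with h | h
    · linarith [hwidth h]
    · linarith [neg_lt_of_abs_lt (htail h), (F.tailWidth_mem_Icc t.2).1]
  · change t.1 + F.tailWidth t.2 < A + 3 * e
    linarith [hwidth h]
  · change t.2 = _ at h
    obtain ⟨h1, h2⟩ := abs_lt.1 (htail (by have := F.T_pos; rw [h]; positivity))
    change t.1 + F.tailWidth t.2 ∈ _
    rw [h, tailWidth, width_half_period F.T_pos, switchSet]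
    split_ifs
    · exact Set.mem_Ioi.2 (by linarith)
    · exact Set.mem_Iio.2 (by linarith)

lemma discArea_map_shear_le {z t w : Plane} (h : F.Domain (z, shear F.tailWidth t, w))
    (htail : 0 < t.2 → |t.1| < e / 4) (hz : discArea z ≤ 2 * A) :
    discArea (F.map (z, shear F.tailWidth t, w)).1 +
      discArea (F.map (z, shear F.tailWidth t, w)).2.1 ≤ 3 * A + 8 * e := by
  have he := F.pos_error
  rcases le_or_gt t.2 0 with hs | hs
  · rw [discArea_map_of_nonpos h hs]
    linarith [h.base hs]
  · refine (discArea_map_le_of_pos h hs).trans ?_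
    have hρ : t.1 + F.tailWidth t.2 ≤ 2 * (A + 3 * e) + e := by
      linarith [lt_of_abs_lt (htail hs), (F.tailWidth_mem_Icc t.2).2]
    have hmax : max (2 * (A + 3 * e)) (t.1 + F.tailWidth t.2) ≤ 2 * (A + 3 * e) + e :=
      max_le (by linarith) hρ
    exact (add_le_add_right hmax _).trans (by linarith)

end Fold

section Embedding

/-- The open ellipsoid of areas `1 + τ` and `(1 + τ) * x`, stabilised by a plane. -/
def openEllipsoid (x τ : ℝ) : Set Planes := {p | discArea p.1 + discArea p.2.1 / x < 1 + τ}

lemma isOpen_openEllipsoid (x τ : ℝ) : IsOpen (openEllipsoid x τ) := by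
  have := continuous_discArea
  exact isOpen_lt (by fun_prop) continuous_const

theorem exists_planes_embedding {x μ : ℝ} (hx : 1 ≤ x) (hμ : 3 * x / (x + 1) < μ) :
    ∃ (τ : ℝ) (f : Planes → Planes), 0 < τ ∧
      (∀ p ∈ openEllipsoid x τ, SympAt sixForm sixForm f p) ∧
      Set.InjOn f (openEllipsoid x τ) ∧
      ∀ p ∈ openEllipsoid x τ, discArea (f p).1 + discArea (f p).2.1 ≤ μ := by
  have hx0 : 0 < x := by linarith
  -- The tail starts at area `a`, where the fibre of the ellipsoid has area `1 - a / x = a` as well.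
  set a := x / (x + 1) with ha
  have hax : a / x = 1 - a := by rw [ha]; field_simp; ring
  have ha2 : 1 / 2 ≤ a := by rw [ha, div_le_div_iff₀ two_pos (by positivity)]; linarith
  obtain ⟨e, he, heμ⟩ : ∃ e, 0 < e ∧ 3 * (a + e) + 8 * e = μ :=
    ⟨(μ - 3 * a) / 11, by rw [ha, ← mul_div_assoc]; linarith, by ring⟩
  have hA : 0 < a + e := by linarith
  obtain ⟨ℓ, hℓ, hℓ1⟩ := exists_between ((div_lt_one hA).2 (lt_add_of_pos_right a he))
  obtain ⟨F⟩ := nonempty_fold hA he hℓ1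
  obtain ⟨σ, hσ, hσ_inj, hσ_tail⟩ := exists_tail (a := a) (w := (a + e) / 2) (B := x * (1 + e))
    (ℓ := ℓ) (δ := e / 4) (by linarith) (by linarith)
    (by rwa [mul_div_cancel₀ _ two_ne_zero, ← div_lt_iff₀' hA]) (by positivity)
  obtain ⟨ψ, hψ, hψ_inj, hψ_strip⟩ := exists_plane_to_strip
  set g : Planes → Planes := fun p => (p.1, shear F.tailWidth (σ p.2.1), ψ p.2.2)
  have hg (p : Planes) : SympAt sixForm sixForm g p := (sympAt_id p.1).prodMap
    (((sympAt_shear contDiff_width (σ p.2.1)).comp p.2.1 (hσ p.2.1)).prodMap (hψ p.2.2))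
  have hg_inj : Function.Injective g := Function.injective_id.prodMap
    (((shear_injective F.tailWidth).comp hσ_inj).prodMap hψ_inj)
  have htail : ∀ p ∈ openEllipsoid x e, -ℓ < (σ p.2.1).2 ∧ |(σ p.2.1).1| < (a + e) / 2 ∧
      (0 < (σ p.2.1).2 → |(σ p.2.1).1| < e / 4 ∧ a < discArea p.2.1) := fun p hp =>
    hσ_tail _ ((div_lt_iff₀' hx0).1
      ((le_add_of_nonneg_left (discArea_nonneg p.1)).trans_lt hp))
  have hdomain : ∀ p ∈ openEllipsoid x e, F.Domain (g p) := fun p hp => by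
    obtain ⟨hs, hw, ht⟩ := htail p hp
    refine F.domain_shear hs hw (fun h => (ht h).1) (fun h => ?_) (hψ_strip _)
    have := (div_lt_div_iff_of_pos_right hx0).2 (ht h).2
    linarith [Set.mem_ofPred.1 hp]
  refine ⟨e, fun p => F.map (g p), he, fun p hp => (Fold.sympAt_map (hdomain p hp)).comp p (hg p),
    fun p hp q hq h => hg_inj (Fold.injOn_map (hdomain p hp) (hdomain q hq) h), fun p hp => ?_⟩
  refine (F.discArea_map_shear_le (hdomain p hp) (fun h => ((htail p hp).2.2 h).1) ?_).trans_eq heμ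
  have : 0 ≤ discArea p.2.1 / x := div_nonneg (discArea_nonneg _) hx0.le
  linarith [Set.mem_ofPred.1 hp]

/-- Real coordinates on `ℂ ^ (m + 3)`, with the first three planes split off. -/
noncomputable def planesEquiv (m : ℕ) : (Fin (m + 3) → ℂ) ≃L[ℝ] Planes × (Fin m → ℂ) :=
  LinearEquiv.toContinuousLinearEquiv
    { toFun := fun z => ((((z 0).re, (z 0).im), ((z 1).re, (z 1).im), ((z 2).re, (z 2).im)),
        fun j => z j.succ.succ.succ)
      invFun := fun p => Fin.cons ⟨p.1.1.1, p.1.1.2⟩ (Fin.cons ⟨p.1.2.1.1, p.1.2.1.2⟩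
        (Fin.cons ⟨p.1.2.2.1, p.1.2.2.2⟩ p.2))
      map_add' := fun _ _ => rfl
      map_smul' := fun _ _ => by ext <;> simp
      left_inv := fun z => by
        funext j
        exact Fin.cases rfl (fun j => Fin.cases rfl (fun j => Fin.cases rfl (fun j => rfl) j) j) j
      right_inv := fun _ => rfl }

variable {m : ℕ}

lemma planesEquiv_apply (z : Fin (m + 3) → ℂ) :
    planesEquiv m z = ((((z 0).re, (z 0).im), ((z 1).re, (z 1).im), ((z 2).re, (z 2).im)),
      fun j => z j.succ.succ.succ) :=
  rfl

lemma omega0_planesEquiv (u v : Fin (m + 3) → ℂ) :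
    prodForm sixForm omega0 (planesEquiv m u) (planesEquiv m v) = omega0 u v := by
  have him (a b : ℂ) : a.re * b.im - a.im * b.re = ((starRingEnd ℂ) a * b).im := by
    rw [Complex.mul_im, Complex.conj_re, Complex.conj_im]; ring
  rw [planesEquiv_apply, planesEquiv_apply, omega0, Fin.sum_univ_succ, Fin.sum_univ_succ,
    Fin.sum_univ_succ]
  simp only [prodForm, areaForm, omega0, him, Fin.succ_zero_eq_one, Fin.succ_one_eq_two, add_assoc]

lemma discArea_re_im (z : ℂ) : discArea (z.re, z.im) = Real.pi * ‖z‖ ^ 2 := by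
  rw [discArea, Complex.sq_norm, Complex.normSq_apply, sq, sq]

lemma mem_stabEll_iff {a b : ℝ} {z : Fin (m + 3) → ℂ} : z ∈ stabEll a b (m + 1) ↔
    discArea (planesEquiv m z).1.1 / a + discArea (planesEquiv m z).1.2.1 / b ≤ 1 := by
  have h0 : discArea (planesEquiv m z).1.1 = Real.pi * ‖z 0‖ ^ 2 := discArea_re_im _
  have h1 : discArea (planesEquiv m z).1.2.1 = Real.pi * ‖z 1‖ ^ 2 := discArea_re_im _
  rw [h0, h1, mul_div_assoc, mul_div_assoc, ← mul_add]
  rfl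

theorem sympEmb_of_planes {U V : Set (Fin (m + 3) → ℂ)} {O : Set Planes} {f : Planes → Planes}
    (hO : IsOpen O) (hf : ∀ p ∈ O, SympAt sixForm sixForm f p) (hinj : Set.InjOn f O)
    (hU : ∀ z ∈ U, (planesEquiv m z).1 ∈ O)
    (hV : ∀ z ∈ U, (planesEquiv m).symm (f (planesEquiv m z).1, (planesEquiv m z).2) ∈ V) :
    SympEmb U V := by
  set Φ := planesEquiv m
  have hΦ (z) : SympAt omega0 (prodForm sixForm omega0) Φ z :=
    sympAt_continuousLinearMap (Φ : (Fin (m + 3) → ℂ) →L[ℝ] Planes × (Fin m → ℂ))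
      omega0_planesEquiv z
  have hΦ_symm (q) : SympAt (prodForm sixForm omega0) omega0 Φ.symm q :=
    sympAt_continuousLinearMap (Φ.symm : Planes × (Fin m → ℂ) →L[ℝ] (Fin (m + 3) → ℂ))
      (fun u v => by
        rw [← omega0_planesEquiv]
        exact congrArg₂ _ (Φ.apply_symm_apply u) (Φ.apply_symm_apply v)) q
  set G : (Fin (m + 3) → ℂ) → (Fin (m + 3) → ℂ) := fun z => Φ.symm (f (Φ z).1, (Φ z).2)
  have hG : ∀ z, (Φ z).1 ∈ O → SympAt omega0 omega0 G z := fun z hz =>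
    SympAt.comp (f := fun z => (f (Φ z).1, (Φ z).2)) z (hΦ_symm _)
      (((hf _ hz).prodMap (sympAt_id _)).comp z (hΦ z))
  refine ⟨{z | (Φ z).1 ∈ O}, G, hO.preimage (continuous_fst.comp Φ.continuous), hU,
    fun z hz => (hG z hz).1.contDiffWithinAt, fun z hz w hw h => ?_, Set.image_subset_iff.2 hV,
    fun z hz => (hG z hz).2⟩
  obtain ⟨h1, h2⟩ := Prod.mk.inj (Φ.symm.injective h)
  exact Φ.injective (Prod.ext (hinj hz hw h1) h2)

theorem sympEmb_stabEll {x μ : ℝ} (m : ℕ) (hx : 1 ≤ x) (hμ : 3 * x / (x + 1) < μ) :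
    SympEmb (stabEll 1 x (m + 1)) (stabEll μ μ (m + 1)) := by
  obtain ⟨τ, f, hτ, hf, hinj, hball⟩ := exists_planes_embedding hx hμ
  have hμ0 : 0 < μ := lt_trans (by positivity) hμ
  have hmem : ∀ z ∈ stabEll 1 x (m + 1), (planesEquiv m z).1 ∈ openEllipsoid x τ := fun z hz => by
    rw [mem_stabEll_iff, div_one] at hz
    exact hz.trans_lt (lt_add_of_pos_right 1 hτ)
  refine sympEmb_of_planes (isOpen_openEllipsoid x τ) hf hinj hmem fun z hz => ?_
  rw [mem_stabEll_iff, ContinuousLinearEquiv.apply_symm_apply, ← add_div, div_le_one hμ0]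
  exact hball _ (hmem z hz)

end Embedding

end

/-- (Hind's folding bound.) For every integer `k ≥ 1` and every real `x ≥ 1`,
`c_k(x) ≤ 3x/(x+1)`. -/
theorem ck_le_fold (k : ℕ) (hk : 1 ≤ k) (x : ℝ) (hx : 1 ≤ x) :
    ck k x ≤ 3 * x / (x + 1) := by
  obtain ⟨m, rfl⟩ := Nat.exists_eq_add_of_le' hk
  refine le_of_forall_gt_imp_ge_of_dense fun μ hμ => csInf_le ⟨0, fun _ h => h.1.le⟩ ⟨?_, ?_⟩
  · exact lt_trans (by positivity) hμ
  · exact sympEmb_stabEll m hx hμ
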